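/- Assume the Riemann Hypothesis and fix λ > 0. Then for all sufficiently large T, #{ordered pairs (γ,γ') of ordinates in (0,T], counted with multiplicity, with 0 < |γ − γ'| ≤ 2πλ/log T} ≪ (T log T) · D_d(λ,T)^{1/4} ≤ (T log T) · D(λ,T)^{1/4}, with an implied constant depending at most on λ. -/

import Mathlib

open Filter MeasureTheory
open scoped Real

noncomputable section

/-- The multiplicity (order of vanishing) of the Riemann zeta function at a point `z`:
the least `n` such that the `n`-th derivative of `ζ` at `z` is nonzero. -/
def zetaMult (z : ℂ) : ℕ := sInf {n : ℕ | iteratedDeriv n riemannZeta z ≠ 0}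

/-- Under RH, the set of ordinates `γ` with `0 < γ ≤ T` of nontrivial zeros `1/2 + iγ` of `ζ`. -/
def zetaOrds (T : ℝ) : Set ℝ :=
  {γ : ℝ | 0 < γ ∧ γ ≤ T ∧ riemannZeta (1 / 2 + γ * Complex.I) = 0}

/-- The multiplicity of the zero of `ζ` at `1/2 + iγ`. -/
def ordMult (γ : ℝ) : ℕ := zetaMult (1 / 2 + γ * Complex.I)

/-- `N(T)`: the number of ordinates of nontrivial zeros in `(0, T]`, counted with multiplicity. -/
def zetaN (T : ℝ) : ℕ := ∑ᶠ γ ∈ zetaOrds T, ordMult γ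

/-- The next ordinate of a nontrivial zero strictly above `γ`. -/
def nextOrd (γ : ℝ) : ℝ :=
  sInf {γ' : ℝ | γ < γ' ∧ riemannZeta (1 / 2 + γ' * Complex.I) = 0}

/-- The number of ordinates `0 < γ ≤ T`, counted with multiplicity, whose successor `γ⁺` in the
nondecreasing sequence of ordinates (with multiplicity) satisfies `γ⁺ - γ ≤ 2πλ / log T`.
A distinct ordinate of multiplicity `m` contributes `m - 1` spacings equal to `0`, together
with the gap `nextOrd γ - γ` to the next distinct ordinate. -/
def Dcount (lam T : ℝ) : ℕ :=
  ∑ᶠ γ ∈ zetaOrds T,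
    ((ordMult γ - 1) + if nextOrd γ - γ ≤ 2 * π * lam / Real.log T then 1 else 0)

/-- `D(λ, T)`: the proportion of ordinates `0 < γ ≤ T` (with multiplicity) with
`γ⁺ - γ ≤ 2πλ / log T`. -/
def Dprop (lam T : ℝ) : ℝ := (Dcount lam T : ℝ) / (zetaN T : ℝ)

/-- The number of distinct ordinates `0 < γ_d ≤ T` with `γ_d⁺ - γ_d ≤ 2πλ / log T`, where
`γ_d⁺` is the next distinct ordinate after `γ_d`. -/
def Ddcount (lam T : ℝ) : ℕ :=
  Nat.card {γ : ℝ | γ ∈ zetaOrds T ∧ nextOrd γ - γ ≤ 2 * π * lam / Real.log T}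

/-- `D_d(λ, T)`: the number of distinct ordinates `0 < γ_d ≤ T` with
`γ_d⁺ - γ_d ≤ 2πλ / log T`, divided by `N(T)`. -/
def Ddprop (lam T : ℝ) : ℝ := (Ddcount lam T : ℝ) / (zetaN T : ℝ)

/-- The number of ordered pairs `(γ, γ')` of ordinates in `(0, T]`, counted with multiplicity,
with `0 < |γ - γ'| ≤ δ`; i.e. the sum of `m(γ_d) * m(γ_d')` over pairs of distinct
ordinates `γ_d ≠ γ_d'` in `(0, T]` with `0 < |γ_d - γ_d'| ≤ δ`. -/
def pairCount (T δ : ℝ) : ℕ :=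
  ∑ᶠ p ∈ {p : ℝ × ℝ | p.1 ∈ zetaOrds T ∧ p.2 ∈ zetaOrds T ∧
      0 < |p.1 - p.2| ∧ |p.1 - p.2| ≤ δ}, ordMult p.1 * ordMult p.2

open Complex (I)

/-!
Let `Ψ` be the logarithmic derivative of the entire function `(s - 1) ζ(s)`. Under RH a local
expansion of `Ψ` over the zeros near `1/2 + it` shows that, for `0 < b ≤ 1`, the number of zeros
with ordinate within `b` of `t` is at most `2b (|Ψ(1/2 + b + it)| + O(log (|t| + 3)))`. With
`L = log T / 20`, the fourth moment of these counts over the points `t = j / L ≤ T` and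
half-width `b = A / L` is therefore controlled by that of `Ψ` on the line `σ = 1/2 + A/L`.

To bound the latter, compare `-Ψ` with the Dirichlet polynomial `∑_{n ≤ N} Λ(n) n^(-s)`,
`N ≍ exp L`, whose fourth moment is given by the mean value theorem. On `σ = 4` the difference is
tiny; on `σ = 1/2 + 1/L` its moment is at most `O(A⁴)` times the unknown moment on
`σ = 1/2 + A/L`, plus an admissible error, because the local expansion changes by a factor `O(A)`
between the two lines. Convexity between the lines wins back a factor `exp (1 - A)`, so for large
`A` the unknown moment is absorbed, and the window counts have fourth moment `O(T log T)`.

A pair of distinct ordinates at distance at most `2πλ / log T` lies in the window of its smaller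
member, which is followed by a small gap. Cauchy–Schwarz over the at most `N(T) D_d(λ, T)` windows
that arise in this way gives the bound, even with exponent `1/2` in place of `1/4`.
-/

section LocalLogDeriv

lemma exists_eq_pow_analyticOrderNatAt_mul {f : ℂ → ℂ} (hf : Differentiable ℂ f) {ρ : ℂ}
    (hρ : analyticOrderAt f ρ ≠ ⊤) :
    ∃ g : ℂ → ℂ, Differentiable ℂ g ∧ g ρ ≠ 0 ∧
      ∀ z, f z = (z - ρ) ^ analyticOrderNatAt f ρ * g z := by
  obtain ⟨g, hg, hgρ, hfg⟩ := (hf.analyticAt ρ).analyticOrderAt_ne_top.mp hρ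
  set n := analyticOrderNatAt f ρ
  refine ⟨Function.update (fun z ↦ f z / (z - ρ) ^ n) ρ (g ρ), fun z ↦ ?_, by simpa using hgρ,
    fun z ↦ ?_⟩
  · rcases eq_or_ne z ρ with rfl | hz
    · refine hg.differentiableAt.congr_of_eventuallyEq ?_
      filter_upwards [hfg] with w hw
      rcases eq_or_ne w z with rfl | hwz
      · simp
      · rw [Function.update_of_ne hwz, hw, smul_eq_mul,
          mul_div_cancel_left₀ _ (pow_ne_zero _ (sub_ne_zero.mpr hwz))]
    · have hdiv : DifferentiableAt ℂ (fun z ↦ f z / (z - ρ) ^ n) z :=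
        (hf z).div (by fun_prop) (pow_ne_zero _ (sub_ne_zero.mpr hz))
      refine hdiv.congr_of_eventuallyEq ?_
      filter_upwards [isOpen_compl_singleton.mem_nhds hz] with w hw
      exact Function.update_of_ne hw ..
  · rcases eq_or_ne z ρ with rfl | hz
    · simpa using hfg.self_of_nhds
    · rw [Function.update_of_ne hz, mul_div_cancel₀ _ (pow_ne_zero _ (sub_ne_zero.mpr hz))]

lemma analyticOrderAt_eq_of_eq_pow_mul {f g : ℂ → ℂ} (hg : Differentiable ℂ g) {a ρ : ℂ}
    (hρ : ρ ≠ a) {n : ℕ} (hfg : ∀ z, f z = (z - a) ^ n * g z) :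
    analyticOrderAt f ρ = analyticOrderAt g ρ := by
  have hpow : AnalyticAt ℂ (fun z ↦ (z - a) ^ n) ρ := by fun_prop
  rw [show f = (fun z ↦ (z - a) ^ n) * g from funext hfg,
    analyticOrderAt_mul hpow (hg.analyticAt ρ),
    hpow.analyticOrderAt_eq_zero.mpr (pow_ne_zero _ (sub_ne_zero.mpr hρ)), zero_add]

lemma exists_eq_prod_pow_analyticOrderNatAt_mul (Z : Finset ℂ) {f : ℂ → ℂ}
    (hf : Differentiable ℂ f) (hZ : ∀ ρ ∈ Z, analyticOrderAt f ρ ≠ ⊤) :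
    ∃ g : ℂ → ℂ, Differentiable ℂ g ∧ (∀ ρ ∈ Z, g ρ ≠ 0) ∧
      ∀ z, f z = (∏ ρ ∈ Z, (z - ρ) ^ analyticOrderNatAt f ρ) * g z := by
  classical
  induction Z using Finset.induction_on generalizing f with
  | empty => exact ⟨f, hf, by simp, by simp⟩
  | insert a Z ha ih =>
    obtain ⟨g, hg, hga, hfg⟩ := exists_eq_pow_analyticOrderNatAt_mul hf (hZ a (by simp))
    have horder : ∀ ρ ∈ Z, analyticOrderAt f ρ = analyticOrderAt g ρ := fun ρ hρ ↦
      analyticOrderAt_eq_of_eq_pow_mul hg (ne_of_mem_of_not_mem hρ ha) hfg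
    obtain ⟨h, hh, hhZ, hgh⟩ := ih hg fun ρ hρ ↦ horder ρ hρ ▸ hZ ρ (by simp [hρ])
    refine ⟨h, hh, fun ρ hρ ↦ ?_, fun z ↦ ?_⟩
    · rcases Finset.mem_insert.mp hρ with rfl | hρ
      · exact fun h0 ↦ hga (by rw [hgh, h0, mul_zero])
      · exact hhZ ρ hρ
    · rw [Finset.prod_insert ha, hfg, hgh, mul_assoc]
      congr 2
      exact Finset.prod_congr rfl fun ρ hρ ↦ by simp only [analyticOrderNatAt, horder ρ hρ]

lemma analyticOrderAt_ne_top_of_differentiable {g : ℂ → ℂ} (hg : Differentiable ℂ g) {c : ℂ}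
    (hc : g c ≠ 0) (ρ : ℂ) : analyticOrderAt g ρ ≠ ⊤ := fun h ↦
  have hana : AnalyticOnNhd ℂ g Set.univ := fun z _ ↦ hg.analyticAt z
  hc (hana.eqOn_zero_of_preconnected_of_eventuallyEq_zero isPreconnected_univ
    (Set.mem_univ ρ) (analyticOrderAt_eq_top.mp h) (Set.mem_univ c))

lemma finite_zeros_norm_sub_le {g : ℂ → ℂ} (hg : Differentiable ℂ g) {c : ℂ} (hc : g c ≠ 0)
    (r : ℝ) : {ρ | g ρ = 0 ∧ ‖ρ - c‖ ≤ r}.Finite := by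
  have hana : AnalyticOnNhd ℂ g Set.univ := fun z _ ↦ hg.analyticAt z
  refine ((isCompact_closedBall c r).finite_sdiff_of_mem_codiscreteWithin
    (codiscreteWithin_mono (Set.subset_univ _)
      (hana.preimage_zero_mem_codiscrete hc))).subset ?_
  rintro ρ ⟨hρ, hle⟩
  exact ⟨mem_closedBall_iff_norm.mpr hle, by simpa using hρ⟩

lemma logDeriv_prod_pow {ι : Type*} {Z : Finset ι} {f : ι → ℂ → ℂ} {m : ι → ℕ} {z : ℂ}
    (hf : ∀ i ∈ Z, DifferentiableAt ℂ (f i) z) (hne : ∀ i ∈ Z, f i z ≠ 0) :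
    logDeriv (fun w ↦ ∏ i ∈ Z, f i w ^ m i) z = ∑ i ∈ Z, m i * logDeriv (f i) z := by
  rw [logDeriv_prod (f := fun i w ↦ f i w ^ m i) (fun i hi ↦ pow_ne_zero _ (hne i hi))
    (fun i hi ↦ (hf i hi).pow _)]
  exact Finset.sum_congr rfl fun i hi ↦ logDeriv_fun_pow (hf i hi) _

/-- The denominator of the Blaschke factor of the disc `|z - c| < R` at `ρ`, normalised to have
the modulus of `z - ρ` on the boundary circle. Trading `z - ρ` for it moves the zero `ρ` out of
the disc. -/
def reflectedFactor (c : ℂ) (R : ℝ) (ρ z : ℂ) : ℂ :=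
  (R ^ 2 - (starRingEnd ℂ) (ρ - c) * (z - c)) / R

namespace reflectedFactor

variable {c ρ z : ℂ} {R r r₀ : ℝ}

lemma differentiable (c : ℂ) (R : ℝ) (ρ : ℂ) : Differentiable ℂ (reflectedFactor c R ρ) := by
  unfold reflectedFactor; fun_prop

lemma norm_eq_of_norm_sub_eq (hR : 0 < R) (hz : ‖z - c‖ = R) :
    ‖reflectedFactor c R ρ z‖ = ‖z - ρ‖ := by
  have hsq : (R : ℂ) ^ 2 = (starRingEnd ℂ) (z - c) * (z - c) := by
    rw [mul_comm, Complex.mul_conj, Complex.normSq_eq_norm_sq, hz]; push_cast; rfl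
  rw [reflectedFactor, hsq, ← sub_mul, ← map_sub, norm_div, norm_mul, Complex.norm_conj, hz,
    sub_sub_sub_cancel_right, Complex.norm_of_nonneg hR.le, mul_div_cancel_right₀ _ hR.ne']

lemma le_norm (hR : 0 < R) (hρ : ‖ρ - c‖ ≤ r) (hz : ‖z - c‖ ≤ r₀) :
    (R ^ 2 - r * r₀) / R ≤ ‖reflectedFactor c R ρ z‖ := by
  rw [reflectedFactor, norm_div, Complex.norm_of_nonneg hR.le]
  gcongr
  have hprod : ‖ρ - c‖ * ‖z - c‖ ≤ r * r₀ := by gcongr; exact (norm_nonneg _).trans hρ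
  have htri := norm_sub_norm_le ((R : ℂ) ^ 2) ((starRingEnd ℂ) (ρ - c) * (z - c))
  rw [norm_mul, Complex.norm_conj, norm_pow, Complex.norm_of_nonneg hR.le] at htri
  linarith

lemma ne_zero (hR : 0 < R) (hρ : ‖ρ - c‖ ≤ r) (hz : ‖z - c‖ ≤ r₀) (hlt : r * r₀ < R ^ 2) :
    reflectedFactor c R ρ z ≠ 0 :=
  norm_pos_iff.mp ((div_pos (sub_pos.mpr hlt) hR).trans_le (le_norm hR hρ hz))

lemma norm_logDeriv_le (hR : 0 < R) (hρ : ‖ρ - c‖ ≤ r) (hz : ‖z - c‖ ≤ r₀)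
    (hlt : r * r₀ < R ^ 2) : ‖logDeriv (reflectedFactor c R ρ) z‖ ≤ r / (R ^ 2 - r * r₀) := by
  have hderiv : HasDerivAt (reflectedFactor c R ρ) (-(starRingEnd ℂ) (ρ - c) / R) z := by
    have hlin := ((hasDerivAt_id z).sub_const c).const_mul ((starRingEnd ℂ) (ρ - c))
    rw [mul_one] at hlin
    exact (hlin.const_sub _).div_const _
  calc ‖logDeriv (reflectedFactor c R ρ) z‖ = ‖ρ - c‖ / R / ‖reflectedFactor c R ρ z‖ := by
        rw [logDeriv_apply, hderiv.deriv, norm_div, norm_div, norm_neg, Complex.norm_conj,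
          Complex.norm_of_nonneg hR.le]
    _ ≤ r / R / ((R ^ 2 - r * r₀) / R) :=
        div_le_div₀ (div_nonneg ((norm_nonneg _).trans hρ) hR.le) (by gcongr)
          (div_pos (sub_pos.mpr hlt) hR) (le_norm hR hρ hz)
    _ = r / (R ^ 2 - r * r₀) := div_div_div_cancel_right₀ hR.ne' _ _

lemma mul_norm_sub_le_norm_center (hR : 0 < R) (hr : 0 < r) (hρ : ‖ρ - c‖ ≤ r) :
    R / r * ‖c - ρ‖ ≤ ‖reflectedFactor c R ρ c‖ := by
  have hcenter : reflectedFactor c R ρ c = R := by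
    simp [reflectedFactor, sq, hR.ne']
  rw [hcenter, Complex.norm_of_nonneg hR.le, div_mul_eq_mul_div, div_le_iff₀ hr, norm_sub_rev]
  gcongr

end reflectedFactor

lemma exists_hasDerivAt_logDeriv_eq_mul_exp {G : ℂ → ℂ} (hG : Differentiable ℂ G) {c : ℂ} {R : ℝ}
    (hne : ∀ z ∈ Metric.ball c R, G z ≠ 0) :
    ∃ φ : ℂ → ℂ, φ c = 0 ∧ ∀ z ∈ Metric.ball c R,
      HasDerivAt φ (logDeriv G z) z ∧ G z = G c * Complex.exp (φ z) := by
  have hdiff : DifferentiableOn ℂ (logDeriv G) (Metric.ball c R) :=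
    (hG.differentiableOn.deriv isOpen_univ |>.mono (Set.subset_univ _)).div
      hG.differentiableOn hne
  obtain ⟨φ, hφc, hφ⟩ := hdiff.isExactOn_ball.with_val_at c 0
  refine ⟨φ, hφc, fun z hz ↦ ⟨hφ z hz, ?_⟩⟩
  have hderiv : ∀ w ∈ Metric.ball c R, HasDerivAt (fun w ↦ G w * Complex.exp (-φ w)) 0 w := by
    intro w hw
    refine ((hG w).hasDerivAt.mul (hφ w hw).neg.cexp).congr_deriv ?_
    rw [logDeriv_apply]
    field_simp [hne w hw]
    ring
  have hc : c ∈ Metric.ball c R := Metric.mem_ball_self (Metric.pos_of_mem_ball hz)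
  have hconst : G z * Complex.exp (-φ z) = G c * Complex.exp (-φ c) :=
    Metric.isOpen_ball.is_const_of_deriv_eq_zero (convex_ball c R).isPreconnected
      (fun w hw ↦ (hderiv w hw).differentiableAt.differentiableWithinAt)
      (fun w hw ↦ (hderiv w hw).deriv) hz hc
  rw [hφc, neg_zero, Complex.exp_zero, mul_one] at hconst
  rw [← hconst, mul_assoc, ← Complex.exp_add, neg_add_cancel, Complex.exp_zero, mul_one]

-- Borel–Carathéodory on the radius `(r + R) / 2` for a branch of `log G`, then the Cauchy estimate.
lemma norm_logDeriv_le_of_norm_le_exp_mul {G : ℂ → ℂ} (hG : Differentiable ℂ G) {c z : ℂ}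
    {r R M : ℝ} (hM : 0 < M) (hrR : r < R) (hne : ∀ w ∈ Metric.ball c R, G w ≠ 0)
    (hbound : ∀ w ∈ Metric.ball c R, ‖G w‖ ≤ Real.exp M * ‖G c‖) (hz : ‖z - c‖ ≤ r) :
    ‖logDeriv G z‖ ≤ 8 * R / (R - r) ^ 2 * M := by
  obtain ⟨φ, hφc, hφ⟩ := exists_hasDerivAt_logDeriv_eq_mul_exp hG hne
  have hr0 : 0 ≤ r := (norm_nonneg _).trans hz
  have hshift : ∀ w ∈ Metric.ball (0 : ℂ) R, c + w ∈ Metric.ball c R := fun w hw ↦ by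
    simpa using hw
  have hre : Set.MapsTo (fun w ↦ φ (c + w)) (Metric.ball 0 R) {z | z.re ≤ M} := fun w hw ↦ by
    have hle := hbound _ (hshift w hw)
    rw [(hφ _ (hshift w hw)).2, norm_mul, Complex.norm_exp, mul_comm] at hle
    exact Real.exp_le_exp.mp (le_of_mul_le_mul_right hle
      (norm_pos_iff.mpr (hne c (Metric.mem_ball_self (hr0.trans_lt hrR)))))
  have hdiff : DifferentiableOn ℂ φ (Metric.ball c R) := fun w hw ↦
    (hφ w hw).1.differentiableAt.differentiableWithinAt
  have hcaratheodory : ∀ w, ‖w - c‖ ≤ (r + R) / 2 → ‖φ w‖ ≤ 4 * R / (R - r) * M := by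
    intro w hw
    have hbc := Complex.borelCaratheodory_zero hM (f := fun w ↦ φ (c + w))
      (hdiff.comp (by fun_prop) hshift) hre (by linarith) (z := w - c)
      (by rw [mem_ball_zero_iff]; linarith) (by simpa using hφc)
    rw [add_sub_cancel] at hbc
    calc ‖φ w‖ ≤ 2 * M * ‖w - c‖ / (R - ‖w - c‖) := hbc
      _ ≤ 2 * M * R / ((R - r) / 2) := by
        have hR : 0 ≤ R := hr0.trans hrR.le
        gcongr <;> linarith
      _ = 4 * R / (R - r) * M := by field_simp; ring
  have hnear : ∀ w, ‖w - z‖ ≤ (R - r) / 2 → ‖w - c‖ ≤ (r + R) / 2 := fun w hw ↦ by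
    linarith [norm_sub_le_norm_sub_add_norm_sub w z c]
  have hsub : Metric.closedBall z ((R - r) / 2) ⊆ Metric.ball c R := fun w hw ↦
    mem_ball_iff_norm.mpr (by linarith [hnear w (mem_closedBall_iff_norm.mp hw)])
  have hcauchy := Complex.norm_deriv_le_of_forall_mem_sphere_norm_le (by linarith)
    ((hdiff.mono hsub).diffContOnCl_ball subset_rfl)
    fun w hw ↦ hcaratheodory w (hnear w (mem_sphere_iff_norm.mp hw).le)
  rw [(hφ z (mem_ball_iff_norm.mpr (hz.trans_lt hrR))).1.deriv] at hcauchy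
  refine hcauchy.trans_eq ?_
  have : R - r ≠ 0 := (sub_pos.mpr hrR).ne'
  field_simp
  ring

section ZerosInDisc

variable {g : ℂ → ℂ} {c : ℂ} {r R M : ℝ} {Z : Finset ℂ}

lemma exists_reflect_zeros (hg : Differentiable ℂ g) (hc : g c ≠ 0) (hr : 0 < r) (hrR : r < R)
    (hZ : ∀ ρ, ρ ∈ Z ↔ g ρ = 0 ∧ ‖ρ - c‖ ≤ r) :
    ∃ G : ℂ → ℂ, Differentiable ℂ G ∧ (∀ z, ‖z - c‖ ≤ r → G z ≠ 0) ∧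
      (∀ z, ‖z - c‖ = R → ‖G z‖ = ‖g z‖) ∧
      (R / r) ^ (∑ ρ ∈ Z, analyticOrderNatAt g ρ) * ‖g c‖ ≤ ‖G c‖ ∧
      ∀ z, ‖z - c‖ ≤ r → g z ≠ 0 →
        logDeriv g z - ∑ ρ ∈ Z, (analyticOrderNatAt g ρ : ℂ) / (z - ρ) =
          logDeriv G z - ∑ ρ ∈ Z, analyticOrderNatAt g ρ * logDeriv (reflectedFactor c R ρ) z := by
  obtain ⟨h, hh, hhZ, hgh⟩ := exists_eq_prod_pow_analyticOrderNatAt_mul Z hg fun ρ _ ↦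
    analyticOrderAt_ne_top_of_differentiable hg hc ρ
  set m := analyticOrderNatAt g
  have hR : 0 < R := hr.trans hrR
  have hfactor : ∀ z, ‖z - c‖ ≤ r → ∀ ρ ∈ Z, reflectedFactor c R ρ z ≠ 0 := fun z hz ρ hρ ↦
    reflectedFactor.ne_zero hR ((hZ ρ).mp hρ).2 hz (by nlinarith)
  have hfactor_diff := reflectedFactor.differentiable c R
  have hhne : ∀ z, ‖z - c‖ ≤ r → h z ≠ 0 := fun z hz h0 ↦
    hhZ z ((hZ z).mpr ⟨by rw [hgh, h0, mul_zero], hz⟩) h0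
  have hprod : ∀ z, ‖z - c‖ ≤ r → ∏ ρ ∈ Z, reflectedFactor c R ρ z ^ m ρ ≠ 0 := fun z hz ↦
    Finset.prod_ne_zero_iff.mpr fun ρ hρ ↦ pow_ne_zero _ (hfactor z hz ρ hρ)
  refine ⟨fun z ↦ (∏ ρ ∈ Z, reflectedFactor c R ρ z ^ m ρ) * h z, by fun_prop,
    fun z hz ↦ mul_ne_zero (hprod z hz) (hhne z hz), fun z hz ↦ ?_, ?_, fun z hz hgz ↦ ?_⟩
  · rw [hgh z]
    simp only [norm_mul, norm_prod, norm_pow, reflectedFactor.norm_eq_of_norm_sub_eq hR hz]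
  · rw [hgh c]
    simp only [norm_mul, norm_prod, norm_pow]
    rw [← Finset.prod_pow_eq_pow_sum, ← mul_assoc, ← Finset.prod_mul_distrib]
    gcongr with ρ hρ
    rw [← mul_pow]
    gcongr
    exact reflectedFactor.mul_norm_sub_le_norm_center hR hr ((hZ ρ).mp hρ).2
  · have hsub : ∀ ρ ∈ Z, z - ρ ≠ 0 := fun ρ hρ h0 ↦
      hgz (sub_eq_zero.mp h0 ▸ ((hZ ρ).mp hρ).1)
    rw [show g = fun z ↦ (∏ ρ ∈ Z, (z - ρ) ^ m ρ) * h z from funext hgh,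
      logDeriv_mul z (Finset.prod_ne_zero_iff.mpr fun ρ hρ ↦ pow_ne_zero _ (hsub ρ hρ))
        (hhne z hz) (by fun_prop) (hh z),
      logDeriv_mul z (hprod z hz) (hhne z hz) (by fun_prop) (hh z),
      logDeriv_prod_pow (fun ρ _ ↦ by fun_prop) hsub,
      logDeriv_prod_pow (fun ρ _ ↦ hfactor_diff ρ z) (hfactor z hz)]
    simp only [logDeriv_apply, deriv_sub_const, deriv_id'', mul_one_div]
    ring

lemma norm_le_of_norm_le_on_sphere {G : ℂ → ℂ} (hG : Differentiable ℂ G) {B : ℝ} (hR : 0 < R)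
    (hB : ∀ z, ‖z - c‖ = R → ‖G z‖ ≤ B) {z : ℂ} (hz : ‖z - c‖ ≤ R) : ‖G z‖ ≤ B := by
  refine Complex.norm_le_of_forall_mem_frontier_norm_le (U := Metric.ball c R)
    Metric.isBounded_ball hG.diffContOnCl (fun w hw ↦ hB w ?_) ?_
  · rwa [frontier_ball c hR.ne', mem_sphere_iff_norm] at hw
  · rwa [closure_ball c hR.ne', mem_closedBall_iff_norm]

lemma sum_analyticOrderNatAt_mul_log_le (hg : Differentiable ℂ g) (hc : g c ≠ 0) (hr : 0 < r)
    (hrR : r < R) (hZ : ∀ ρ, ρ ∈ Z ↔ g ρ = 0 ∧ ‖ρ - c‖ ≤ r)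
    (hbound : ∀ z, ‖z - c‖ = R → ‖g z‖ ≤ Real.exp M * ‖g c‖) :
    (∑ ρ ∈ Z, (analyticOrderNatAt g ρ : ℝ)) * Real.log (R / r) ≤ M := by
  obtain ⟨G, hG, -, hsphere, hcenter, -⟩ := exists_reflect_zeros hg hc hr hrR hZ
  have hR : 0 < R := hr.trans hrR
  have hGc : ‖G c‖ ≤ Real.exp M * ‖g c‖ :=
    norm_le_of_norm_le_on_sphere hG hR (fun z hz ↦ hsphere z hz ▸ hbound z hz)
      (by simpa using hR.le)
  have hpow := le_of_mul_le_mul_right (hcenter.trans hGc) (norm_pos_iff.mpr hc)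
  rw [← Real.log_le_iff_le_exp (by positivity), Real.log_pow] at hpow
  exact_mod_cast hpow

lemma norm_logDeriv_sub_sum_le (hg : Differentiable ℂ g) (hc : g c ≠ 0) (hr : 0 < r) (hrR : r < R)
    (hZ : ∀ ρ, ρ ∈ Z ↔ g ρ = 0 ∧ ‖ρ - c‖ ≤ r)
    (hbound : ∀ z, ‖z - c‖ = R → ‖g z‖ ≤ Real.exp M * ‖g c‖)
    {z : ℂ} {r₀ : ℝ} (hr₀ : r₀ < r) (hM : 0 < M) (hz : ‖z - c‖ ≤ r₀) (hgz : g z ≠ 0) :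
    ‖logDeriv g z - ∑ ρ ∈ Z, (analyticOrderNatAt g ρ : ℂ) / (z - ρ)‖ ≤
      8 * r / (r - r₀) ^ 2 * M +
        r / (R ^ 2 - r * r₀) * ∑ ρ ∈ Z, (analyticOrderNatAt g ρ : ℝ) := by
  obtain ⟨G, hG, hGne, hsphere, hcenter, hlogDeriv⟩ := exists_reflect_zeros hg hc hr hrR hZ
  have hR : 0 < R := hr.trans hrR
  rw [hlogDeriv z (hz.trans hr₀.le) hgz, Finset.mul_sum]
  have hgc : ‖g c‖ ≤ ‖G c‖ :=
    (le_mul_of_one_le_left (norm_nonneg _) (one_le_pow₀ ((one_le_div hr).mpr hrR.le))).trans hcenter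
  refine (norm_sub_le _ _).trans (add_le_add ?_ (norm_sum_le_of_le _ fun ρ hρ ↦ ?_))
  · refine norm_logDeriv_le_of_norm_le_exp_mul hG hM hr₀
      (fun w hw ↦ hGne w (mem_ball_iff_norm.mp hw).le) (fun w hw ↦ ?_) hz
    refine (norm_le_of_norm_le_on_sphere hG hR (fun z hz ↦ hsphere z hz ▸ hbound z hz)
      ((mem_ball_iff_norm.mp hw).le.trans hrR.le)).trans (by gcongr)
  · rw [norm_mul, Complex.norm_natCast, mul_comm]
    gcongr
    exact reflectedFactor.norm_logDeriv_le hR ((hZ ρ).mp hρ).2 hz (by nlinarith)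

end ZerosInDisc

end LocalLogDeriv

section EntireZeta

/-- The entire function `(s - 1) ζ(s)`, with value `1` at the removed pole `s = 1`. -/
def entireZeta : ℂ → ℂ := Function.update (fun s ↦ (s - 1) * riemannZeta s) 1 1

lemma entireZeta_of_ne_one {s : ℂ} (hs : s ≠ 1) : entireZeta s = (s - 1) * riemannZeta s :=
  Function.update_of_ne hs ..

lemma differentiable_entireZeta : Differentiable ℂ entireZeta := by
  rw [← differentiableOn_univ,
    ← Complex.differentiableOn_compl_singleton_and_continuousAt_iff (c := 1) univ_mem]
  refine ⟨fun s hs ↦ ?_, ?_⟩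
  · have hs1 : s ≠ 1 := (Set.mem_sdiff_singleton.mp hs).2
    have hdiff : DifferentiableAt ℂ (fun s ↦ (s - 1) * riemannZeta s) s :=
      (differentiableAt_id.sub_const 1).mul (differentiableAt_riemannZeta hs1)
    refine (hdiff.congr_of_eventuallyEq ?_).differentiableWithinAt
    filter_upwards [isOpen_compl_singleton.mem_nhds hs1] with w hw using entireZeta_of_ne_one hw
  · rw [entireZeta, continuousAt_update_same]
    exact riemannZeta_residue_one

lemma entireZeta_eq_zero_iff {s : ℂ} : entireZeta s = 0 ↔ s ≠ 1 ∧ riemannZeta s = 0 := by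
  rcases eq_or_ne s 1 with rfl | hs
  · simp [entireZeta]
  · simp [entireZeta_of_ne_one hs, hs, sub_eq_zero]

/-- The fractional part cut off to `t > 1`; its Mellin transform at `-s` is the integral
`∫₁^∞ {t} t^(-s-1) dt` of the continuation of `ζ` to `re s > 0`. -/
def truncFract (t : ℝ) : ℂ := if 1 < t then (Int.fract t : ℝ) else 0

lemma measurable_truncFract : Measurable truncFract :=
  Measurable.ite measurableSet_Ioi (by fun_prop) measurable_const

lemma norm_truncFract_le_one (t : ℝ) : ‖truncFract t‖ ≤ 1 := by
  unfold truncFract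
  split_ifs
  · rw [Complex.norm_of_nonneg (Int.fract_nonneg t)]
    exact (Int.fract_lt_one t).le
  · simp

lemma differentiableAt_mellin_truncFract {s : ℂ} (hs : s.re < 0) :
    DifferentiableAt ℂ (mellin truncFract) s := by
  refine mellin_differentiableAt_of_isBigO_rpow (a := 0) (b := s.re - 1) ?_ ?_ hs ?_ (by linarith)
  · refine ((locallyIntegrable_const (1 : ℝ)).mono measurable_truncFract.aestronglyMeasurable
      (.of_forall fun t ↦ ?_)).locallyIntegrableOn _
    simpa using norm_truncFract_le_one t
  · refine .of_bound 1 (.of_forall fun t ↦ ?_)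
    simpa using norm_truncFract_le_one t
  · refine .of_bound 1 ?_
    filter_upwards [mem_nhdsWithin_of_mem_nhds (Iio_mem_nhds one_pos)] with t ht
    simp [truncFract, not_lt.mpr (Set.mem_Iio.mp ht).le]

lemma mellin_truncFract_neg (s : ℂ) : mellin truncFract (-s) =
    ∫ t in Set.Ioi (1 : ℝ), ((Int.fract t : ℝ) : ℂ) * (t : ℂ) ^ (-(s + 1)) := by
  have hindicator : ∀ t : ℝ, (t : ℂ) ^ (-s - 1) • truncFract t = (Set.Ioi (1 : ℝ)).indicator
      (fun t : ℝ ↦ ((Int.fract t : ℝ) : ℂ) * (t : ℂ) ^ (-(s + 1))) t := by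
    intro t
    by_cases ht : 1 < t
    · rw [truncFract, if_pos ht, Set.indicator_of_mem (Set.mem_Ioi.mpr ht), smul_eq_mul, mul_comm,
        neg_add']
    · simp [truncFract, ht]
  simp_rw [mellin, hindicator]
  rw [setIntegral_indicator measurableSet_Ioi, Set.inter_eq_right.mpr
    (Set.Ioi_subset_Ioi zero_le_one)]

lemma norm_fract_mul_cpow_le (s : ℂ) {t : ℝ} (ht : 0 < t) :
    ‖((Int.fract t : ℝ) : ℂ) * (t : ℂ) ^ (-(s + 1))‖ ≤ t ^ (-(s.re + 1)) := by
  rw [norm_mul, Complex.norm_of_nonneg (Int.fract_nonneg t),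
    Complex.norm_cpow_eq_rpow_re_of_pos ht, Complex.neg_re, Complex.add_re, Complex.one_re]
  exact mul_le_of_le_one_left (by positivity) (Int.fract_lt_one t).le

lemma integrableOn_rpow_neg_add_one {a : ℝ} (ha : 0 < a) :
    IntegrableOn (fun t : ℝ ↦ t ^ (-(a + 1))) (Set.Ioi 1) :=
  integrableOn_Ioi_rpow_of_lt (by linarith) one_pos

lemma integrableOn_fract_mul_cpow {s : ℂ} (hs : 0 < s.re) :
    IntegrableOn (fun t : ℝ ↦ ((Int.fract t : ℝ) : ℂ) * (t : ℂ) ^ (-(s + 1))) (Set.Ioi 1) := by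
  refine (integrableOn_rpow_neg_add_one hs).mono' (Measurable.aestronglyMeasurable ?_)
    ((ae_restrict_iff' measurableSet_Ioi).mpr
      (.of_forall fun t ht ↦ norm_fract_mul_cpow_le s (zero_lt_one.trans ht)))
  fun_prop

lemma norm_mellin_truncFract_neg_le {s : ℂ} (hs : 0 < s.re) :
    ‖mellin truncFract (-s)‖ ≤ 1 / s.re := by
  rw [mellin_truncFract_neg]
  calc _ ≤ ∫ t in Set.Ioi (1 : ℝ), t ^ (-(s.re + 1)) :=
        norm_integral_le_of_norm_le (integrableOn_rpow_neg_add_one hs)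
          ((ae_restrict_iff' measurableSet_Ioi).mpr
            (.of_forall fun t ht ↦ norm_fract_mul_cpow_le s (zero_lt_one.trans ht)))
    _ = 1 / s.re := by
        rw [integral_Ioi_rpow_of_lt (by linarith) one_pos]
        simp

lemma ofReal_mul_cpow_neg_add_one {t : ℝ} (ht : t ∈ Set.Ioi (1 : ℝ)) (s : ℂ) :
    (t : ℂ) * (t : ℂ) ^ (-(s + 1)) = (t : ℂ) ^ (-s) := by
  have ht0 : (t : ℂ) ≠ 0 := Complex.ofReal_ne_zero.mpr (zero_lt_one.trans ht).ne'
  rw [show -s = 1 + -(s + 1) by ring, Complex.cpow_add _ _ ht0, Complex.cpow_one]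

lemma integral_floor_mul_cpow {s : ℂ} (hs : 1 < s.re) :
    ∫ t in Set.Ioi (1 : ℝ), (⌊t⌋₊ : ℂ) * (t : ℂ) ^ (-(s + 1)) =
      1 / (s - 1) - mellin truncFract (-s) := by
  have hid : IntegrableOn (fun t : ℝ ↦ (t : ℂ) * (t : ℂ) ^ (-(s + 1))) (Set.Ioi 1) :=
    (integrableOn_Ioi_cpow_of_lt (by simpa using hs) one_pos).congr_fun
      (fun t ht ↦ (ofReal_mul_cpow_neg_add_one ht s).symm) measurableSet_Ioi
  have hid_integral : ∫ t in Set.Ioi (1 : ℝ), (t : ℂ) * (t : ℂ) ^ (-(s + 1)) = 1 / (s - 1) := by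
    rw [setIntegral_congr_fun measurableSet_Ioi fun t ht ↦ ofReal_mul_cpow_neg_add_one ht s,
      integral_Ioi_cpow_of_lt (by simpa using hs) one_pos, Complex.ofReal_one, Complex.one_cpow,
      neg_div, ← div_neg, neg_add', neg_neg]
  rw [mellin_truncFract_neg, ← hid_integral,
    ← integral_sub hid (integrableOn_fract_mul_cpow (by linarith))]
  refine setIntegral_congr_fun measurableSet_Ioi fun t ht ↦ ?_
  have hfloor : (⌊t⌋₊ : ℝ) = t - Int.fract t := by
    rw [natCast_floor_eq_intCast_floor (zero_lt_one.trans ht).le, Int.self_sub_fract]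
  have hfloor' : (⌊t⌋₊ : ℂ) = t - (Int.fract t : ℝ) := by
    exact_mod_cast congrArg Complex.ofReal hfloor
  simp only [hfloor', sub_mul]

lemma entireZeta_eq_of_one_lt_re {s : ℂ} (hs : 1 < s.re) :
    entireZeta s = s - s * (s - 1) * mellin truncFract (-s) := by
  have hs1 : s ≠ 1 := by rintro rfl; simp at hs
  have hzeta := LSeries_eq_mul_integral' (fun _ ↦ 1) (r := 1) zero_le_one hs
    (by simpa using Asymptotics.isBigO_refl _ _)
  simp only [Finset.sum_const, Nat.card_Icc, Nat.add_sub_cancel, nsmul_eq_mul, mul_one,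
    integral_floor_mul_cpow hs] at hzeta
  rw [entireZeta_of_ne_one hs1, ← LSeries_one_eq_riemannZeta hs, Pi.one_def, hzeta]
  field_simp [sub_ne_zero.mpr hs1]

lemma entireZeta_eq_of_re_pos {s : ℂ} (hs : 0 < s.re) :
    entireZeta s = s - s * (s - 1) * mellin truncFract (-s) := by
  have hopen : IsOpen {z : ℂ | 0 < z.re} := isOpen_lt continuous_const Complex.continuous_re
  have hrhs : AnalyticOnNhd ℂ (fun s ↦ s - s * (s - 1) * mellin truncFract (-s))
      {z : ℂ | 0 < z.re} := by
    refine DifferentiableOn.analyticOnNhd (fun z hz ↦ ?_) hopen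
    have hmellin : DifferentiableAt ℂ (fun s ↦ mellin truncFract (-s)) z :=
      (differentiableAt_mellin_truncFract (by simpa using hz)).comp z (by fun_prop)
    exact DifferentiableAt.differentiableWithinAt (by fun_prop)
  refine (differentiable_entireZeta.differentiableOn.analyticOnNhd
    hopen).eqOn_of_preconnected_of_eventuallyEq hrhs (convex_halfSpace_re_gt 0).isPreconnected
    (z₀ := 2) (by simp) ?_ hs
  filter_upwards [(isOpen_lt continuous_const Complex.continuous_re).mem_nhds
    (show (1 : ℝ) < (2 : ℂ).re by simp)] with z hz using entireZeta_eq_of_one_lt_re hz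

lemma norm_entireZeta_le {s : ℂ} (hs : 0 < s.re) :
    ‖entireZeta s‖ ≤ (1 + 1 / s.re) * (‖s‖ + 1) ^ 2 := by
  have hsub : ‖s - 1‖ ≤ ‖s‖ + 1 := by simpa using norm_sub_le s 1
  rw [entireZeta_eq_of_re_pos hs]
  calc _ ≤ ‖s‖ + ‖s‖ * ‖s - 1‖ * ‖mellin truncFract (-s)‖ := by
        rw [← norm_mul, ← norm_mul]; exact norm_sub_le _ _
    _ ≤ (‖s‖ + 1) ^ 2 + (‖s‖ + 1) * (‖s‖ + 1) * (1 / s.re) := by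
        gcongr
        · nlinarith [norm_nonneg s]
        · linarith
        · exact norm_mellin_truncFract_neg_le hs
    _ = (1 + 1 / s.re) * (‖s‖ + 1) ^ 2 := by ring

lemma norm_one_div_natCast_add_one_cpow_le {s : ℂ} (hs : 2 ≤ s.re) (n : ℕ) :
    ‖1 / ((n : ℂ) + 1) ^ s‖ ≤ 1 / ((n : ℝ) + 1) ^ 2 := by
  rw [norm_div, norm_one, ← Nat.cast_add_one, Complex.norm_natCast_cpow_of_pos n.succ_pos,
    ← Real.rpow_two]
  push_cast
  gcongr
  linarith [n.cast_nonneg (α := ℝ)]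

lemma norm_riemannZeta_sub_one_le {s : ℂ} (hs : 2 ≤ s.re) :
    ‖riemannZeta s - 1‖ ≤ π ^ 2 / 6 - 1 := by
  have hsum_sq : HasSum (fun n : ℕ ↦ 1 / ((n : ℝ) + 1) ^ 2) (π ^ 2 / 6) := by
    simpa using (hasSum_nat_add_iff' 1).mpr hasSum_zeta_two
  have htail_sq : HasSum (fun n : ℕ ↦ 1 / (((n + 1 : ℕ) : ℝ) + 1) ^ 2) (π ^ 2 / 6 - 1) := by
    simpa using (hasSum_nat_add_iff' 1).mpr hsum_sq
  have hsummable : Summable (fun n : ℕ ↦ 1 / ((n : ℂ) + 1) ^ s) :=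
    .of_norm_bounded hsum_sq.summable (norm_one_div_natCast_add_one_cpow_le hs)
  have htail : riemannZeta s - 1 = ∑' n : ℕ, 1 / (((n + 1 : ℕ) : ℂ) + 1) ^ s := by
    rw [zeta_eq_tsum_one_div_nat_add_one_cpow (by linarith), hsummable.tsum_eq_zero_add]
    simp
  rw [htail]
  exact tsum_of_norm_bounded htail_sq fun n ↦ norm_one_div_natCast_add_one_cpow_le hs (n + 1)

lemma one_half_le_norm_entireZeta {s : ℂ} (hs : 3 ≤ s.re) : 1 / 2 ≤ ‖entireZeta s‖ := by
  have hs1 : s ≠ 1 := by rintro rfl; norm_num at hs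
  have hzeta : 1 / 4 ≤ ‖riemannZeta s‖ := by
    have htri := norm_sub_norm_le (1 : ℂ) (riemannZeta s)
    rw [norm_sub_rev, norm_one] at htri
    nlinarith [norm_riemannZeta_sub_one_le (s := s) (by linarith), Real.pi_lt_d2, Real.pi_pos]
  have hsub : 2 ≤ ‖s - 1‖ := by
    have hre := Complex.re_le_norm (s - 1)
    rw [Complex.sub_re, Complex.one_re] at hre
    linarith
  rw [entireZeta_of_ne_one hs1, norm_mul]
  nlinarith

end EntireZeta

section NearbyZeros

/-- The size `log (|t| + 3)` of the logarithmic derivative of `ζ` at height `t`; the shift by `3`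
makes it at least `1`. -/
def logHeight (t : ℝ) : ℝ := Real.log (|t| + 3)

lemma one_le_logHeight (t : ℝ) : 1 ≤ logHeight t := by
  rw [logHeight, Real.le_log_iff_exp_le (by positivity)]
  linarith [Real.exp_one_lt_d9, abs_nonneg t]

lemma logHeight_le_two_mul (t : ℝ) : logHeight t ≤ 2 * (|t| + 1) := by
  have hlog := Real.log_le_sub_one_of_pos (show 0 < |t| + 3 by positivity)
  rw [logHeight]
  linarith [abs_nonneg t]

lemma logHeight_add_le (t v : ℝ) : logHeight (t + v) ≤ logHeight t + |v| := by
  have hprod : |t + v| + 3 ≤ (|t| + 3) * (1 + |v|) := by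
    nlinarith [abs_add_le t v, abs_nonneg v, abs_nonneg t]
  have hlog := Real.log_le_sub_one_of_pos (show 0 < 1 + |v| by positivity)
  calc logHeight (t + v) ≤ Real.log ((|t| + 3) * (1 + |v|)) :=
        Real.log_le_log (by positivity) hprod
    _ = logHeight t + Real.log (1 + |v|) := Real.log_mul (by positivity) (by positivity)
    _ ≤ logHeight t + |v| := by linarith

lemma logHeight_le_logHeight {s t : ℝ} (hst : |s| ≤ |t|) : logHeight s ≤ logHeight t :=
  Real.log_le_log (by positivity) (by linarith)

lemma exp_natCast_mul_logHeight (n : ℕ) (t : ℝ) :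
    Real.exp (n * logHeight t) = (|t| + 3) ^ n := by
  rw [Real.exp_nat_mul, logHeight, Real.exp_log (by positivity)]

lemma half_add_mul_I_ne_one (γ : ℝ) : (1 / 2 + γ * I : ℂ) ≠ 1 := fun h ↦ by
  simpa using congrArg Complex.re h

lemma entireZeta_half_add_mul_I_eq_zero_iff {γ : ℝ} :
    entireZeta (1 / 2 + γ * I) = 0 ↔ riemannZeta (1 / 2 + γ * I) = 0 :=
  entireZeta_eq_zero_iff.trans (and_iff_right (half_add_mul_I_ne_one γ))

lemma analyticOrderAt_entireZeta_ne_top (ρ : ℂ) : analyticOrderAt entireZeta ρ ≠ ⊤ :=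
  analyticOrderAt_ne_top_of_differentiable differentiable_entireZeta (c := 1)
    (by simp [entireZeta]) ρ

lemma analyticOrderAt_entireZeta {s : ℂ} (hs : s ≠ 1) :
    analyticOrderAt entireZeta s = analyticOrderAt riemannZeta s := by
  have hzeta : AnalyticAt ℂ riemannZeta s :=
    DifferentiableOn.analyticAt (s := {1}ᶜ)
      (fun z hz ↦ (differentiableAt_riemannZeta hz).differentiableWithinAt)
      (isOpen_compl_singleton.mem_nhds hs)
  have hsub : AnalyticAt ℂ (fun z : ℂ ↦ z - 1) s := by fun_prop
  have heq : entireZeta =ᶠ[nhds s] (fun z ↦ z - 1) * riemannZeta := by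
    filter_upwards [isOpen_compl_singleton.mem_nhds hs] with z hz using entireZeta_of_ne_one hz
  rw [analyticOrderAt_congr heq, analyticOrderAt_mul hsub hzeta,
    hsub.analyticOrderAt_eq_zero.mpr (sub_ne_zero.mpr hs), zero_add]

lemma zetaMult_eq_analyticOrderNatAt {s : ℂ} (hs : s ≠ 1) :
    zetaMult s = analyticOrderNatAt entireZeta s := by
  have hzeta : AnalyticAt ℂ riemannZeta s :=
    DifferentiableOn.analyticAt (s := {1}ᶜ)
      (fun z hz ↦ (differentiableAt_riemannZeta hz).differentiableWithinAt)
      (isOpen_compl_singleton.mem_nhds hs)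
  have horder : analyticOrderAt riemannZeta s = (analyticOrderNatAt entireZeta s : ℕ) := by
    rw [← analyticOrderAt_entireZeta hs,
      Nat.cast_analyticOrderNatAt (analyticOrderAt_entireZeta_ne_top s)]
  obtain ⟨hlower, hne⟩ := (analyticOrderAt_eq_nat_iff_iteratedDeriv_eq_zero hzeta).mp horder
  exact le_antisymm (Nat.sInf_le hne)
    (le_csInf ⟨_, hne⟩ fun n hn ↦ not_lt.mp fun hlt ↦ hn (hlower n hlt))

lemma ordMult_eq_analyticOrderNatAt (γ : ℝ) :
    ordMult γ = analyticOrderNatAt entireZeta (1 / 2 + γ * I) :=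
  zetaMult_eq_analyticOrderNatAt (half_add_mul_I_ne_one γ)

lemma ordMult_pos {γ : ℝ} (hγ : riemannZeta (1 / 2 + γ * I) = 0) : 0 < ordMult γ := by
  have horder := (differentiable_entireZeta.analyticAt (1 / 2 + γ * I)).analyticOrderAt_ne_zero.mpr
    (entireZeta_half_add_mul_I_eq_zero_iff.mpr hγ)
  rw [← Nat.cast_analyticOrderNatAt (analyticOrderAt_entireZeta_ne_top _),
    ← ordMult_eq_analyticOrderNatAt] at horder
  exact Nat.pos_of_ne_zero fun h ↦ horder (by simp [h])

lemma re_eq_half_of_entireZeta_eq_zero (hRH : RiemannHypothesis) {s : ℂ} (hs : 0 < s.re)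
    (hzero : entireZeta s = 0) : s.re = 1 / 2 := by
  obtain ⟨hs1, hzeta⟩ := entireZeta_eq_zero_iff.mp hzero
  refine hRH s hzeta ?_ hs1
  rintro ⟨n, rfl⟩
  have hre : (-2 * ((n : ℂ) + 1)).re = -2 * ((n : ℝ) + 1) := by simp
  rw [hre] at hs
  linarith [n.cast_nonneg (α := ℝ)]

lemma entireZeta_ne_zero_of_half_lt_re (hRH : RiemannHypothesis) {s : ℂ} (hs : 1 / 2 < s.re) :
    entireZeta s ≠ 0 :=
  fun h ↦ hs.ne' (re_eq_half_of_entireZeta_eq_zero hRH (by linarith) h)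

lemma differentiableAt_logDeriv_entireZeta (hRH : RiemannHypothesis) {s : ℂ}
    (hs : 1 / 2 < s.re) : DifferentiableAt ℂ (logDeriv entireZeta) s :=
  have hderiv : DifferentiableAt ℂ (deriv entireZeta) s :=
    (differentiable_entireZeta.differentiableOn.deriv isOpen_univ).differentiableAt univ_mem
  hderiv.div (differentiable_entireZeta s) (entireZeta_ne_zero_of_half_lt_re hRH hs)

lemma entireZeta_three_add_mul_I_ne_zero (t : ℝ) : entireZeta (3 + t * I) ≠ 0 := fun h ↦ by
  have hlower := one_half_le_norm_entireZeta (s := 3 + t * I) (by simp)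
  norm_num [h] at hlower

/-- The zeros of `ζ` in the disc of radius `14 / 5` about `3 + it`. The disc contains
`1 / 2 + iγ` whenever `|γ - t| ≤ 1`, and its concentric dilation by `29 / 28` still lies in the half
plane `re s > 0`. -/
def nearbyZeros (t : ℝ) : Finset ℂ :=
  (finite_zeros_norm_sub_le differentiable_entireZeta (entireZeta_three_add_mul_I_ne_zero t)
    (14 / 5)).toFinset

lemma mem_nearbyZeros {t : ℝ} {ρ : ℂ} :
    ρ ∈ nearbyZeros t ↔ entireZeta ρ = 0 ∧ ‖ρ - (3 + t * I)‖ ≤ 14 / 5 := by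
  simp [nearbyZeros]

lemma three_sub_le_re {t r : ℝ} {z : ℂ} (hz : ‖z - (3 + t * I)‖ ≤ r) : 3 - r ≤ z.re := by
  have hre := (abs_le.mp ((Complex.abs_re_le_norm (z - (3 + t * I))).trans hz)).1
  have hsub : (z - (3 + t * I)).re = z.re - 3 := by simp
  rw [hsub] at hre
  linarith

lemma re_eq_half_of_mem_nearbyZeros (hRH : RiemannHypothesis) {t : ℝ} {ρ : ℂ}
    (hρ : ρ ∈ nearbyZeros t) : ρ.re = 1 / 2 := by
  obtain ⟨hzero, hdist⟩ := mem_nearbyZeros.mp hρ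
  exact re_eq_half_of_entireZeta_eq_zero hRH (by linarith [three_sub_le_re hdist]) hzero

lemma half_add_mul_I_mem_nearbyZeros {γ t : ℝ} (hγ : riemannZeta (1 / 2 + γ * I) = 0)
    (ht : |γ - t| ≤ 1) : (1 / 2 + γ * I : ℂ) ∈ nearbyZeros t := by
  refine mem_nearbyZeros.mpr ⟨entireZeta_half_add_mul_I_eq_zero_iff.mpr hγ, ?_⟩
  have hsub : (1 / 2 + γ * I - (3 + t * I) : ℂ) = ((-5 / 2 : ℝ) : ℂ) + ((γ - t : ℝ) : ℂ) * I := by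
    push_cast; ring
  rw [hsub, Complex.norm_add_mul_I, Real.sqrt_le_left (by norm_num)]
  linarith [(sq_le_one_iff_abs_le_one (γ - t)).mpr ht]

lemma norm_entireZeta_le_exp_mul {t : ℝ} {z : ℂ} (hz : ‖z - (3 + t * I)‖ = 29 / 10) :
    ‖entireZeta z‖ ≤ Real.exp (10 * logHeight t) * ‖entireZeta (3 + t * I)‖ := by
  have hre : 1 / 10 ≤ z.re := by linarith [three_sub_le_re hz.le]
  have hcentre : ‖(3 + t * I : ℂ)‖ ≤ 3 + |t| := (norm_add_le _ _).trans (by simp)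
  have htri : ‖z‖ ≤ ‖z - (3 + t * I)‖ + ‖(3 + t * I : ℂ)‖ := by
    simpa using norm_add_le (z - (3 + t * I)) (3 + t * I)
  have hpow : (3 : ℝ) ^ 8 ≤ (|t| + 3) ^ 8 := by gcongr; linarith [abs_nonneg t]
  calc ‖entireZeta z‖ ≤ (1 + 1 / z.re) * (‖z‖ + 1) ^ 2 := norm_entireZeta_le (by linarith)
    _ ≤ (1 + 1 / (1 / 10)) * (23 / 10 * (|t| + 3)) ^ 2 := by
        gcongr
        linarith [abs_nonneg t]
    _ ≤ (|t| + 3) ^ 8 * (|t| + 3) ^ 2 * (1 / 2) := by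
        nlinarith [mul_le_mul_of_nonneg_right hpow (sq_nonneg (|t| + 3))]
    _ = Real.exp (10 * logHeight t) * (1 / 2) := by
        rw [← pow_add, ← exp_natCast_mul_logHeight]; norm_num
    _ ≤ _ := by gcongr; exact one_half_le_norm_entireZeta (by simp)

lemma sum_analyticOrderNatAt_nearbyZeros_le (t : ℝ) :
    ∑ ρ ∈ nearbyZeros t, (analyticOrderNatAt entireZeta ρ : ℝ) ≤ 290 * logHeight t := by
  have hjensen := sum_analyticOrderNatAt_mul_log_le differentiable_entireZeta
    (entireZeta_three_add_mul_I_ne_zero t) (by norm_num) (by norm_num)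
    (fun _ ↦ mem_nearbyZeros) fun _ ↦ norm_entireZeta_le_exp_mul
  have hlog : 1 / 29 ≤ Real.log (29 / 10 / (14 / 5)) :=
    le_trans (by norm_num) (Real.one_sub_inv_le_log_of_pos (by norm_num))
  have hnonneg : 0 ≤ ∑ ρ ∈ nearbyZeros t, (analyticOrderNatAt entireZeta ρ : ℝ) := by positivity
  nlinarith [mul_le_mul_of_nonneg_left hlog hnonneg]

/-- The principal part at `z` of the logarithmic derivative of `ζ` coming from the zeros near
height `t`. -/
def nearbyPoleSum (t : ℝ) (z : ℂ) : ℂ :=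
  ∑ ρ ∈ nearbyZeros t, (analyticOrderNatAt entireZeta ρ : ℂ) / (z - ρ)

lemma norm_logDeriv_entireZeta_sub_nearbyPoleSum_le (hRH : RiemannHypothesis) {σ : ℝ} (t : ℝ)
    (hσ : 1 / 2 < σ) (hσ' : σ ≤ 4) :
    ‖logDeriv entireZeta (σ + t * I) - nearbyPoleSum t (σ + t * I)‖ ≤ 30000 * logHeight t := by
  have hdist : ‖(σ + t * I : ℂ) - (3 + t * I)‖ ≤ 27 / 10 := by
    have hsub : (σ + t * I - (3 + t * I) : ℂ) = ((σ - 3 : ℝ) : ℂ) := by push_cast; ring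
    rw [hsub, Complex.norm_real, Real.norm_eq_abs, abs_le]
    constructor <;> linarith
  have hlocal := norm_logDeriv_sub_sum_le differentiable_entireZeta
    (entireZeta_three_add_mul_I_ne_zero t) (by norm_num) (by norm_num)
    (fun _ ↦ mem_nearbyZeros) (fun _ ↦ norm_entireZeta_le_exp_mul) (r₀ := 27 / 10) (by norm_num)
    (by linarith [one_le_logHeight t]) hdist
    (entireZeta_ne_zero_of_half_lt_re hRH (by simpa using hσ))
  refine hlocal.trans ?_
  norm_num only
  linarith [sum_analyticOrderNatAt_nearbyZeros_le t, one_le_logHeight t]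

lemma norm_nearbyPoleSum_le_norm_logDeriv_add (hRH : RiemannHypothesis) {σ : ℝ} (t : ℝ)
    (hσ : 1 / 2 < σ) (hσ' : σ ≤ 4) : ‖nearbyPoleSum t (σ + t * I)‖ ≤
      ‖logDeriv entireZeta (σ + t * I)‖ + 30000 * logHeight t := by
  have hdiff := norm_logDeriv_entireZeta_sub_nearbyPoleSum_le hRH t hσ hσ'
  rw [norm_sub_rev] at hdiff
  linarith [norm_sub_norm_le (nearbyPoleSum t (σ + t * I)) (logDeriv entireZeta (σ + t * I))]

lemma norm_logDeriv_le_norm_nearbyPoleSum_add (hRH : RiemannHypothesis) {σ : ℝ} (t : ℝ)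
    (hσ : 1 / 2 < σ) (hσ' : σ ≤ 4) : ‖logDeriv entireZeta (σ + t * I)‖ ≤
      ‖nearbyPoleSum t (σ + t * I)‖ + 30000 * logHeight t := by
  have hdiff := norm_logDeriv_entireZeta_sub_nearbyPoleSum_le hRH t hσ hσ'
  linarith [norm_sub_norm_le (logDeriv entireZeta (σ + t * I)) (nearbyPoleSum t (σ + t * I))]

lemma norm_logDeriv_entireZeta_le (hRH : RiemannHypothesis) {σ : ℝ} (t : ℝ)
    (hσ : 1 / 2 < σ) (hσ' : σ ≤ 4) : ‖logDeriv entireZeta (σ + t * I)‖ ≤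
      30000 * (1 / (σ - 1 / 2) + 1) * logHeight t := by
  have hpos : 0 < σ - 1 / 2 := by linarith
  have hpoles : ‖nearbyPoleSum t (σ + t * I)‖ ≤
      (∑ ρ ∈ nearbyZeros t, (analyticOrderNatAt entireZeta ρ : ℝ)) / (σ - 1 / 2) := by
    rw [Finset.sum_div]
    refine norm_sum_le_of_le _ fun ρ hρ ↦ ?_
    rw [norm_div, Complex.norm_natCast]
    gcongr
    have hre := Complex.re_le_norm (σ + t * I - ρ)
    simpa [re_eq_half_of_mem_nearbyZeros hRH hρ] using hre
  have hcount := div_le_div_of_nonneg_right (sum_analyticOrderNatAt_nearbyZeros_le t) hpos.le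
  have hslack : 290 * logHeight t / (σ - 1 / 2) ≤ 30000 * (1 / (σ - 1 / 2)) * logHeight t := by
    rw [div_eq_mul_one_div]
    nlinarith [mul_pos (one_div_pos.mpr hpos) (zero_lt_one.trans_le (one_le_logHeight t))]
  linarith [norm_logDeriv_le_norm_nearbyPoleSum_add hRH t hσ hσ']

lemma half_add_add_mul_I_sub_eq (hRH : RiemannHypothesis) {t : ℝ} {ρ : ℂ}
    (hρ : ρ ∈ nearbyZeros t) (x : ℝ) :
    ((1 / 2 + x : ℝ) + t * I - ρ : ℂ) = x + ((t - ρ.im : ℝ) : ℂ) * I := by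
  apply Complex.ext <;> simp [re_eq_half_of_mem_nearbyZeros hRH hρ]

lemma norm_inv_sub_inv_le_mul_re_inv {a A : ℝ} (ha : 0 < a) (hA : 1 ≤ A) (u : ℝ) :
    ‖(a + u * I : ℂ)⁻¹ - ((A * a : ℝ) + u * I : ℂ)⁻¹‖ ≤
      (A - 1) * ((A * a : ℝ) + u * I : ℂ)⁻¹.re := by
  set w : ℂ := a + u * I with hw
  set W : ℂ := (A * a : ℝ) + u * I with hW
  have hAa : 0 < A * a := by positivity
  have hwre : w.re = a := by simp [hw]
  have hWre : W.re = A * a := by simp [hW]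
  have hw0 : w ≠ 0 := fun h ↦ ha.ne' (by rw [← hwre, h, Complex.zero_re])
  have hW0 : W ≠ 0 := fun h ↦ hAa.ne' (by rw [← hWre, h, Complex.zero_re])
  have hnorm : ‖W‖ ≤ A * ‖w‖ := by
    rw [hw, hW, Complex.norm_add_mul_I, Complex.norm_add_mul_I]
    refine Real.sqrt_le_iff.mpr ⟨by positivity, ?_⟩
    rw [mul_pow A √_, Real.sq_sqrt (by positivity)]
    nlinarith [sq_nonneg u, mul_nonneg (sub_nonneg.mpr hA) (sq_nonneg u)]
  have hdiff : W - w = ((A - 1) * a : ℝ) := by rw [hw, hW]; push_cast; ring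
  have : 0 < ‖w‖ := norm_pos_iff.mpr hw0
  have hWpos : 0 < ‖W‖ := norm_pos_iff.mpr hW0
  rw [inv_sub_inv hw0 hW0, hdiff, norm_div, norm_mul, Complex.norm_real, Complex.inv_re, hWre,
    Complex.normSq_eq_norm_sq, Real.norm_of_nonneg (mul_nonneg (by linarith) ha.le),
    mul_div_assoc]
  refine mul_le_mul_of_nonneg_left ?_ (by linarith)
  rw [div_le_div_iff₀ (by positivity) (by positivity)]
  nlinarith [mul_le_mul_of_nonneg_right hnorm (mul_nonneg ha.le hWpos.le)]

lemma norm_nearbyPoleSum_sub_le (hRH : RiemannHypothesis) {a A : ℝ} (t : ℝ) (ha : 0 < a)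
    (hA : 1 ≤ A) : ‖nearbyPoleSum t ((1 / 2 + a : ℝ) + t * I) -
        nearbyPoleSum t ((1 / 2 + A * a : ℝ) + t * I)‖ ≤
      (A - 1) * (nearbyPoleSum t ((1 / 2 + A * a : ℝ) + t * I)).re := by
  rw [nearbyPoleSum, nearbyPoleSum, ← Finset.sum_sub_distrib, Complex.re_sum, Finset.mul_sum]
  refine norm_sum_le_of_le _ fun ρ hρ ↦ ?_
  rw [half_add_add_mul_I_sub_eq hRH hρ, half_add_add_mul_I_sub_eq hRH hρ, div_eq_mul_inv,
    div_eq_mul_inv, ← mul_sub, norm_mul, Complex.norm_natCast, ← Complex.ofReal_natCast,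
    Complex.re_ofReal_mul, mul_left_comm]
  exact mul_le_mul_of_nonneg_left (norm_inv_sub_inv_le_mul_re_inv ha hA _) (Nat.cast_nonneg _)

lemma norm_logDeriv_le_mul_norm_logDeriv_add (hRH : RiemannHypothesis) {a A : ℝ} (t : ℝ)
    (ha : 0 < a) (hA : 1 ≤ A) (hAa : A * a ≤ 1) :
    ‖logDeriv entireZeta ((1 / 2 + a : ℝ) + t * I)‖ ≤
      A * ‖logDeriv entireZeta ((1 / 2 + A * a : ℝ) + t * I)‖ + 60000 * A * logHeight t := by
  have haA : a ≤ A * a := by nlinarith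
  have hnear := norm_logDeriv_le_norm_nearbyPoleSum_add hRH (σ := 1 / 2 + a) t
    (by linarith) (by linarith)
  have hfar := norm_nearbyPoleSum_le_norm_logDeriv_add hRH (σ := 1 / 2 + A * a) t
    (by linarith) (by linarith)
  set S := nearbyPoleSum t ((1 / 2 + a : ℝ) + t * I)
  set S' := nearbyPoleSum t ((1 / 2 + A * a : ℝ) + t * I)
  have hpoles : ‖S‖ ≤ A * ‖S'‖ :=
    calc ‖S‖ ≤ ‖S - S'‖ + ‖S'‖ := norm_le_norm_sub_add S S'
      _ ≤ (A - 1) * ‖S'‖ + ‖S'‖ := by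
          gcongr
          exact (norm_nearbyPoleSum_sub_le hRH t ha hA).trans
            (mul_le_mul_of_nonneg_left (Complex.re_le_norm S') (by linarith))
      _ = A * ‖S'‖ := by ring
  nlinarith [mul_le_mul_of_nonneg_left hfar (zero_le_one.trans hA), one_le_logHeight t]

lemma re_nearbyPoleSum (hRH : RiemannHypothesis) (x t : ℝ) :
    (nearbyPoleSum t ((1 / 2 + x : ℝ) + t * I)).re = ∑ ρ ∈ nearbyZeros t,
      (analyticOrderNatAt entireZeta ρ : ℝ) * (x / (x ^ 2 + (t - ρ.im) ^ 2)) := by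
  rw [nearbyPoleSum, Complex.re_sum]
  refine Finset.sum_congr rfl fun ρ hρ ↦ ?_
  rw [half_add_add_mul_I_sub_eq hRH hρ, div_eq_mul_inv, ← Complex.ofReal_natCast,
    Complex.re_ofReal_mul, Complex.inv_re, Complex.normSq_add_mul_I]
  simp

lemma sum_ordMult_div_le_re_nearbyPoleSum (hRH : RiemannHypothesis) {b t : ℝ} (hb : 0 < b)
    (hb1 : b ≤ 1) {S : Finset ℝ}
    (hS : ∀ γ ∈ S, riemannZeta (1 / 2 + γ * I) = 0 ∧ |γ - t| ≤ b) :
    (∑ γ ∈ S, (ordMult γ : ℝ)) / (2 * b) ≤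
      (nearbyPoleSum t ((1 / 2 + b : ℝ) + t * I)).re := by
  classical
  have hinj : Set.InjOn (fun γ : ℝ ↦ (1 / 2 + γ * I : ℂ)) S := fun x _ y _ h ↦ by
    simpa using congrArg Complex.im h
  rw [re_nearbyPoleSum hRH, Finset.sum_div]
  calc _ ≤ ∑ γ ∈ S, (analyticOrderNatAt entireZeta (1 / 2 + γ * I) : ℝ) *
          (b / (b ^ 2 + (t - (1 / 2 + γ * I : ℂ).im) ^ 2)) := by
        refine Finset.sum_le_sum fun γ hγ ↦ ?_
        have him : (1 / 2 + γ * I : ℂ).im = γ := by simp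
        have hsq : (t - γ) ^ 2 ≤ b ^ 2 := by
          rw [sq_le_sq, abs_sub_comm, abs_of_pos hb]; exact (hS γ hγ).2
        rw [ordMult_eq_analyticOrderNatAt, div_eq_mul_one_div, him]
        gcongr ?_ * ?_
        rw [div_le_div_iff₀ (by positivity) (by positivity)]
        nlinarith
    _ = ∑ ρ ∈ S.image fun γ : ℝ ↦ (1 / 2 + γ * I : ℂ),
          (analyticOrderNatAt entireZeta ρ : ℝ) * (b / (b ^ 2 + (t - ρ.im) ^ 2)) := by
        rw [Finset.sum_image hinj]
    _ ≤ _ := by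
        refine Finset.sum_le_sum_of_subset_of_nonneg
          (Finset.image_subset_iff.mpr fun γ hγ ↦ ?_) fun _ _ _ ↦ by positivity
        exact half_add_mul_I_mem_nearbyZeros (hS γ hγ).1 ((hS γ hγ).2.trans hb1)

lemma sum_ordMult_le_norm_logDeriv (hRH : RiemannHypothesis) {b t : ℝ} (hb : 0 < b)
    (hb1 : b ≤ 1) {S : Finset ℝ}
    (hS : ∀ γ ∈ S, riemannZeta (1 / 2 + γ * I) = 0 ∧ |γ - t| ≤ b) :
    ∑ γ ∈ S, (ordMult γ : ℝ) ≤
      2 * b * (‖logDeriv entireZeta ((1 / 2 + b : ℝ) + t * I)‖ + 30000 * logHeight t) := by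
  have hcount := (sum_ordMult_div_le_re_nearbyPoleSum hRH hb hb1 hS).trans
    ((Complex.re_le_norm _).trans (norm_nearbyPoleSum_le_norm_logDeriv_add hRH t
      (by linarith) (by linarith)))
  rwa [div_le_iff₀' (by positivity)] at hcount

end NearbyZeros

section MeanValue

lemma norm_exp_I_mul_sub_one_ge {α : ℝ} (hα : |α| ≤ π) :
    2 * |α| / π ≤ ‖Complex.exp (I * α) - 1‖ := by
  have hjordan := Real.mul_abs_le_abs_sin (x := α / 2) (by rw [abs_div, abs_two]; linarith)
  rw [abs_div, abs_two] at hjordan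
  rw [Complex.norm_exp_I_mul_ofReal_sub_one, norm_mul, Real.norm_eq_abs, Real.norm_eq_abs, abs_two]
  calc 2 * |α| / π = 2 * (2 / π * (|α| / 2)) := by ring
    _ ≤ 2 * |Real.sin (α / 2)| := by linarith

lemma norm_sum_range_exp_le {α η : ℝ} (J : ℕ) (hη : 0 < η) (hηα : η ≤ |α|) (hα : |α| ≤ π) :
    ‖∑ j ∈ Finset.range J, Complex.exp (I * (j * α : ℝ))‖ ≤ π / η := by
  set w : ℂ := Complex.exp (I * α) with hw
  have hα0 : 0 < |α| := hη.trans_le hηα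
  have hlower : 2 * |α| / π ≤ ‖w - 1‖ := norm_exp_I_mul_sub_one_ge hα
  have hpos : 0 < 2 * |α| / π := by positivity
  have hw1 : w ≠ 1 := sub_ne_zero.mp (norm_pos_iff.mp (hpos.trans_le hlower))
  have hnorm : ‖w‖ = 1 := by rw [hw, mul_comm]; exact Complex.norm_exp_ofReal_mul_I α
  have hnumerator : ‖w ^ J - 1‖ ≤ 2 := by
    refine (norm_sub_le _ _).trans ?_
    rw [norm_pow, hnorm]; norm_num
  have hpow : ∀ j : ℕ, Complex.exp (I * (j * α : ℝ)) = w ^ j := fun j ↦ by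
    rw [hw, ← Complex.exp_nat_mul]; push_cast; ring_nf
  simp_rw [hpow]
  rw [geom_sum_eq hw1, norm_div]
  calc ‖w ^ J - 1‖ / ‖w - 1‖ ≤ 2 / (2 * |α| / π) := by gcongr
    _ = π / |α| := by field_simp
    _ ≤ π / η := by gcongr

variable {ι : Type*} {P : Finset ι} {x : ι → ℂ} {θ : ι → ℝ} {η : ℝ}

lemma norm_sq_sum_mul_exp_eq (P : Finset ι) (x : ι → ℂ) (θ : ι → ℝ) (j : ℕ) :
    ((‖∑ p ∈ P, x p * Complex.exp (I * (j * θ p : ℝ))‖ ^ 2 : ℝ) : ℂ) =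
      ∑ p ∈ P, ∑ q ∈ P, x p * (starRingEnd ℂ) (x q) *
        Complex.exp (I * (j * (θ p - θ q) : ℝ)) := by
  rw [← Complex.normSq_eq_norm_sq, ← Complex.mul_conj, map_sum, Finset.sum_mul_sum]
  refine Finset.sum_congr rfl fun p _ ↦ Finset.sum_congr rfl fun q _ ↦ ?_
  have hexp : Complex.exp (I * (j * (θ p - θ q) : ℝ)) =
      Complex.exp (I * (j * θ p : ℝ)) * Complex.exp (-I * (j * θ q : ℝ)) := by
    rw [← Complex.exp_add]; push_cast; ring_nf
  rw [map_mul, ← Complex.exp_conj, map_mul, Complex.conj_I, Complex.conj_ofReal, hexp]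
  ring

lemma sum_norm_sq_sum_mul_exp_le (hη : 0 < η) (J : ℕ)
    (hsep : ∀ p ∈ P, ∀ q ∈ P, p ≠ q → η ≤ |θ p - θ q| ∧ |θ p - θ q| ≤ π) :
    ∑ j ∈ Finset.range J, ‖∑ p ∈ P, x p * Complex.exp (I * (j * θ p : ℝ))‖ ^ 2 ≤
      J * ∑ p ∈ P, ‖x p‖ ^ 2 + π / η * (∑ p ∈ P, ‖x p‖) ^ 2 := by
  classical
  have hexpand :
      ((∑ j ∈ Finset.range J, ‖∑ p ∈ P, x p * Complex.exp (I * (j * θ p : ℝ))‖ ^ 2 : ℝ) : ℂ) =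
      ∑ p ∈ P, ∑ q ∈ P, x p * (starRingEnd ℂ) (x q) *
        ∑ j ∈ Finset.range J, Complex.exp (I * (j * (θ p - θ q) : ℝ)) := by
    simp_rw [Complex.ofReal_sum, norm_sq_sum_mul_exp_eq, Finset.mul_sum]
    rw [Finset.sum_comm]
    exact Finset.sum_congr rfl fun p _ ↦ Finset.sum_comm
  have hterm : ∀ p ∈ P, ∀ q ∈ P, ‖x p * (starRingEnd ℂ) (x q) *
      ∑ j ∈ Finset.range J, Complex.exp (I * (j * (θ p - θ q) : ℝ))‖ ≤
      (if p = q then J * ‖x p‖ ^ 2 else 0) + π / η * (‖x p‖ * ‖x q‖) := by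
    intro p hp q hq
    rw [norm_mul, norm_mul, Complex.norm_conj]
    split_ifs with hpq
    · have hoff : 0 ≤ π / η * (‖x p‖ * ‖x q‖) := by positivity
      simp only [hpq, sub_self, mul_zero, Complex.ofReal_zero, Complex.exp_zero, Finset.sum_const,
        Finset.card_range, nsmul_eq_mul, mul_one, Complex.norm_natCast] at hoff ⊢
      linarith
    · obtain ⟨hlow, hup⟩ := hsep p hp q hq hpq
      rw [zero_add, mul_comm (π / η)]
      gcongr
      exact norm_sum_range_exp_le J hη hlow hup
  calc _ = ‖((∑ j ∈ Finset.range J,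
            ‖∑ p ∈ P, x p * Complex.exp (I * (j * θ p : ℝ))‖ ^ 2 : ℝ) : ℂ)‖ :=
        (Complex.norm_of_nonneg (by positivity)).symm
    _ ≤ ∑ p ∈ P, ∑ q ∈ P,
          ((if p = q then J * ‖x p‖ ^ 2 else 0) + π / η * (‖x p‖ * ‖x q‖)) := by
        rw [hexpand]
        exact norm_sum_le_of_le _ fun p hp ↦ norm_sum_le_of_le _ (hterm p hp)
    _ = _ := by
        rw [sq (∑ p ∈ P, ‖x p‖), Finset.sum_mul_sum, Finset.mul_sum, Finset.mul_sum,
          ← Finset.sum_add_distrib]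
        refine Finset.sum_congr rfl fun p hp ↦ ?_
        rw [Finset.sum_add_distrib, Finset.sum_ite_eq, if_pos hp, Finset.mul_sum]

end MeanValue

section DirichletPolynomial

/-- The Dirichlet polynomial `∑_{n ≤ N} a(n) n^(-s)`. -/
def dirichletPoly (a : ℕ → ℂ) (N : ℕ) (s : ℂ) : ℂ := ∑ n ∈ Finset.Ioc 0 N, a n * (n : ℂ) ^ (-s)

lemma one_div_le_log_sub_log {a b M : ℕ} (ha : 0 < a) (hab : a < b) (hbM : b ≤ M) :
    1 / (M : ℝ) ≤ Real.log b - Real.log a := by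
  have ha' : (0 : ℝ) < a := by exact_mod_cast ha
  have hb' : (0 : ℝ) < b := by exact_mod_cast ha.trans hab
  have hab' : (a : ℝ) + 1 ≤ b := by exact_mod_cast hab
  calc 1 / (M : ℝ) ≤ 1 / b := by gcongr
    _ ≤ 1 - (b / a : ℝ)⁻¹ := by
        rw [inv_div, one_sub_div hb'.ne']
        gcongr
        linarith
    _ ≤ Real.log (b / a) := Real.one_sub_inv_le_log_of_pos (by positivity)
    _ = Real.log b - Real.log a := Real.log_div hb'.ne' ha'.ne'

lemma abs_log_sub_log_bounds {m n M : ℕ} (hm : m ∈ Finset.Ioc 0 M) (hn : n ∈ Finset.Ioc 0 M)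
    (hmn : m ≠ n) :
    1 / (M : ℝ) ≤ |Real.log m - Real.log n| ∧ |Real.log m - Real.log n| ≤ Real.log M := by
  wlog hlt : m < n generalizing m n
  · rw [abs_sub_comm]
    exact this hn hm hmn.symm (by omega)
  rw [Finset.mem_Ioc] at hm hn
  have hlow := one_div_le_log_sub_log hm.1 hlt hn.2
  have hMpos : (0 : ℝ) ≤ 1 / M := by positivity
  have hup : Real.log n ≤ Real.log M :=
    Real.log_le_log (by exact_mod_cast hn.1) (by exact_mod_cast hn.2)
  rw [abs_sub_comm, abs_of_nonneg (by linarith)]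
  exact ⟨hlow, by linarith [Real.log_natCast_nonneg m]⟩

lemma natCast_cpow_neg_add_sample {n : ℕ} (hn : n ≠ 0) (L σ v : ℝ) (j : ℕ) :
    (n : ℂ) ^ (-(σ + (j / L + v : ℝ) * I)) =
      (n : ℂ) ^ (-(σ + v * I)) * Complex.exp (I * (j * (-Real.log n / L) : ℝ)) := by
  have hn' : (n : ℂ) ≠ 0 := Nat.cast_ne_zero.mpr hn
  rw [Complex.cpow_def_of_ne_zero hn', Complex.cpow_def_of_ne_zero hn', ← Complex.exp_add,
    ← Complex.natCast_log]
  push_cast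
  ring_nf

lemma norm_natCast_cpow_neg {n : ℕ} (hn : 0 < n) (σ v : ℝ) :
    ‖(n : ℂ) ^ (-(σ + v * I))‖ = (n : ℝ) ^ (-σ) := by
  rw [Complex.norm_natCast_cpow_of_pos hn]; simp

lemma sum_norm_sq_dirichletPoly_le (a : ℕ → ℂ) {M : ℕ} (J : ℕ) {L : ℝ} (σ v : ℝ) (hM : 0 < M)
    (hL : 0 < L) (hML : Real.log M ≤ π * L) :
    ∑ j ∈ Finset.range J, ‖dirichletPoly a M (σ + (j / L + v : ℝ) * I)‖ ^ 2 ≤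
      J * ∑ n ∈ Finset.Ioc 0 M, (‖a n‖ * (n : ℝ) ^ (-σ)) ^ 2 +
        π * M * L * (∑ n ∈ Finset.Ioc 0 M, ‖a n‖ * (n : ℝ) ^ (-σ)) ^ 2 := by
  have : (0 : ℝ) < M := by exact_mod_cast hM
  have hnorm : ∀ n ∈ Finset.Ioc 0 M,
      ‖a n * (n : ℂ) ^ (-(σ + v * I))‖ = ‖a n‖ * (n : ℝ) ^ (-σ) := fun n hn ↦ by
    rw [norm_mul, norm_natCast_cpow_neg (Finset.mem_Ioc.mp hn).1]
  have hsample : ∀ j : ℕ, dirichletPoly a M (σ + (j / L + v : ℝ) * I) = ∑ n ∈ Finset.Ioc 0 M,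
      a n * (n : ℂ) ^ (-(σ + v * I)) * Complex.exp (I * (j * (-Real.log n / L) : ℝ)) := fun j ↦
    Finset.sum_congr rfl fun n hn ↦ by
      rw [natCast_cpow_neg_add_sample (Finset.mem_Ioc.mp hn).1.ne', mul_assoc]
  have hmean := sum_norm_sq_sum_mul_exp_le (P := Finset.Ioc 0 M)
    (x := fun n ↦ a n * (n : ℂ) ^ (-(σ + v * I))) (θ := fun n ↦ -Real.log n / L)
    (η := 1 / (M * L)) (by positivity) J fun m hm n hn hmn ↦ by
      obtain ⟨hlow, hup⟩ := abs_log_sub_log_bounds hm hn hmn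
      rw [← sub_div, neg_sub_neg, abs_div, abs_of_pos hL, abs_sub_comm, div_le_iff₀ hL, ← div_div]
      exact ⟨by gcongr, hup.trans hML⟩
  simp_rw [hsample]
  rwa [Finset.sum_congr rfl hnorm,
    Finset.sum_congr rfl fun n hn ↦ congrArg (· ^ 2) (hnorm n hn : ‖_‖ = _),
    div_div_eq_mul_div, div_one, ← mul_assoc] at hmean

/-- The coefficient at `k` of the square of the Dirichlet polynomial `∑_{n ≤ N} a(n) n^(-s)`. -/
def dirichletSqCoeff {R : Type*} [CommSemiring R] (a : ℕ → R) (N k : ℕ) : R :=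
  ∑ p ∈ Finset.Ioc 0 N ×ˢ Finset.Ioc 0 N with p.1 * p.2 = k, a p.1 * a p.2

lemma sum_dirichletSqCoeff_mul {R : Type*} [CommSemiring R] (a f : ℕ → R) (N : ℕ)
    (hf : ∀ m n, 0 < m → 0 < n → f (m * n) = f m * f n) :
    ∑ k ∈ Finset.Ioc 0 (N ^ 2), dirichletSqCoeff a N k * f k =
      (∑ n ∈ Finset.Ioc 0 N, a n * f n) ^ 2 := by
  have hmaps : ∀ p ∈ Finset.Ioc 0 N ×ˢ Finset.Ioc 0 N, p.1 * p.2 ∈ Finset.Ioc 0 (N ^ 2) := by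
    simp only [Finset.mem_product, Finset.mem_Ioc]
    exact fun p hp ↦ ⟨Nat.mul_pos hp.1.1 hp.2.1, sq N ▸ Nat.mul_le_mul hp.1.2 hp.2.2⟩
  rw [sq (∑ n ∈ _, _), Finset.sum_mul_sum, ← Finset.sum_product',
    ← Finset.sum_fiberwise_of_maps_to hmaps]
  refine Finset.sum_congr rfl fun k _ ↦ ?_
  rw [dirichletSqCoeff, Finset.sum_mul]
  refine Finset.sum_congr rfl fun p hp ↦ ?_
  simp only [Finset.mem_filter, Finset.mem_product, Finset.mem_Ioc] at hp
  rw [← hp.2, hf _ _ hp.1.1.1 hp.1.2.1, mul_mul_mul_comm]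

lemma dirichletPoly_sq (a : ℕ → ℂ) (N : ℕ) (s : ℂ) :
    dirichletPoly a N s ^ 2 = dirichletPoly (dirichletSqCoeff a N) (N ^ 2) s :=
  (sum_dirichletSqCoeff_mul a (fun n ↦ (n : ℂ) ^ (-s)) N fun m n _ _ ↦ by
    rw [Nat.cast_mul, Complex.natCast_mul_natCast_cpow]).symm

/-- The discrete fourth moment `∑_{j < J} |F(σ + i(j / L + v))|⁴`. -/
def fourthMoment (F : ℂ → ℂ) (L : ℝ) (J : ℕ) (σ v : ℝ) : ℝ :=
  ∑ j ∈ Finset.range J, ‖F (σ + (j / L + v : ℝ) * I)‖ ^ 4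

end DirichletPolynomial

section VonMangoldt

open ArithmeticFunction (vonMangoldt vonMangoldt_nonneg vonMangoldt_le_log)

/-- The truncation `∑_{n ≤ N} Λ(n) n^(-s)` of the Dirichlet series of minus the logarithmic
derivative of `ζ`. -/
def mangoldtPoly (N : ℕ) (s : ℂ) : ℂ := dirichletPoly (fun n ↦ (vonMangoldt n : ℂ)) N s

lemma natCast_div_le_two_mul_div {n N : ℕ} (hn : n ∈ Finset.Ioc 0 N) :
    (N : ℝ) / n ≤ 2 * ((N / n : ℕ) : ℝ) := by
  obtain ⟨hn0, hnN⟩ := Finset.mem_Ioc.mp hn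
  have hquot : 1 ≤ N / n := (Nat.one_le_div_iff hn0).mpr hnN
  have hlt : N < n * (N / n + 1) := Nat.lt_mul_div_succ N hn0
  have hle : N ≤ 2 * (N / n) * n := by nlinarith
  rw [div_le_iff₀ (by exact_mod_cast hn0)]
  exact_mod_cast hle

lemma log_le_log_of_mem_Ioc {n N : ℕ} (hn : n ∈ Finset.Ioc 0 N) : Real.log n ≤ Real.log N :=
  have h := Finset.mem_Ioc.mp hn
  Real.log_le_log (by exact_mod_cast h.1) (by exact_mod_cast h.2)

lemma sum_vonMangoldt_div_le {N : ℕ} (hN : 0 < N) :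
    ∑ n ∈ Finset.Ioc 0 N, vonMangoldt n / n ≤ 2 * Real.log N := by
  have hN' : (0 : ℝ) < N := by exact_mod_cast hN
  refine le_of_mul_le_mul_left ?_ hN'
  calc (N : ℝ) * ∑ n ∈ Finset.Ioc 0 N, vonMangoldt n / n
      = ∑ n ∈ Finset.Ioc 0 N, vonMangoldt n * ((N : ℝ) / n) := by
        rw [Finset.mul_sum]; exact Finset.sum_congr rfl fun n _ ↦ by ring
    _ ≤ ∑ n ∈ Finset.Ioc 0 N, vonMangoldt n * (2 * ((N / n : ℕ) : ℝ)) :=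
        Finset.sum_le_sum fun n hn ↦
          mul_le_mul_of_nonneg_left (natCast_div_le_two_mul_div hn) vonMangoldt_nonneg
    _ = 2 * ∑ n ∈ Finset.Ioc 0 N, vonMangoldt n * ((N / n : ℕ) : ℝ) := by
        rw [Finset.mul_sum]; exact Finset.sum_congr rfl fun n _ ↦ by ring
    _ = 2 * ∑ n ∈ Finset.Ioc 0 N, Real.log n := by
        rw [← ArithmeticFunction.sum_Ioc_mul_zeta_eq_sum,
          ArithmeticFunction.vonMangoldt_mul_zeta]
        rfl
    _ ≤ 2 * ∑ _n ∈ Finset.Ioc 0 N, Real.log N := by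
        gcongr 2 * ?_
        exact Finset.sum_le_sum fun _ hn ↦ log_le_log_of_mem_Ioc hn
    _ = N * (2 * Real.log N) := by
        rw [Finset.sum_const, Nat.card_Ioc, Nat.sub_zero, nsmul_eq_mul, mul_left_comm]

lemma dirichletSqCoeff_vonMangoldt_nonneg (N k : ℕ) : 0 ≤ dirichletSqCoeff vonMangoldt N k :=
  Finset.sum_nonneg fun _ _ ↦ mul_nonneg vonMangoldt_nonneg vonMangoldt_nonneg

lemma dirichletSqCoeff_vonMangoldt_le (N : ℕ) {k : ℕ} (hk : 0 < k) :
    dirichletSqCoeff vonMangoldt N k ≤ Real.log k * Real.log N := by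
  have hmem : ∀ p ∈ (Finset.Ioc 0 N ×ˢ Finset.Ioc 0 N).filter (fun p ↦ p.1 * p.2 = k),
      0 < p.1 ∧ p.2 ∈ Finset.Ioc 0 N ∧ p.1 * p.2 = k := fun p hp ↦ by
    simp only [Finset.mem_filter, Finset.mem_product, Finset.mem_Ioc] at hp ⊢
    exact ⟨hp.1.1.1, hp.1.2, hp.2⟩
  have hinj : Set.InjOn Prod.fst
      ((Finset.Ioc 0 N ×ˢ Finset.Ioc 0 N).filter fun p ↦ p.1 * p.2 = k : Set (ℕ × ℕ)) := by
    intro p hp q hq hpq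
    have hprod := (hmem p hp).2.2.trans (hmem q hq).2.2.symm
    rw [hpq] at hprod
    exact Prod.ext hpq (Nat.eq_of_mul_eq_mul_left (hmem q hq).1 hprod)
  calc dirichletSqCoeff vonMangoldt N k
      ≤ ∑ p ∈ Finset.Ioc 0 N ×ˢ Finset.Ioc 0 N with p.1 * p.2 = k,
          vonMangoldt p.1 * Real.log N :=
        Finset.sum_le_sum fun p hp ↦ mul_le_mul_of_nonneg_left
          (vonMangoldt_le_log.trans (log_le_log_of_mem_Ioc (hmem p hp).2.1)) vonMangoldt_nonneg
    _ = ∑ d ∈ ((Finset.Ioc 0 N ×ˢ Finset.Ioc 0 N).filter fun p ↦ p.1 * p.2 = k).image Prod.fst,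
          vonMangoldt d * Real.log N := by rw [Finset.sum_image hinj]
    _ ≤ ∑ d ∈ k.divisors, vonMangoldt d * Real.log N := by
        refine Finset.sum_le_sum_of_subset_of_nonneg (Finset.image_subset_iff.mpr fun p hp ↦ ?_)
          fun _ _ _ ↦ mul_nonneg vonMangoldt_nonneg (Real.log_natCast_nonneg N)
        exact Nat.mem_divisors.mpr ⟨⟨p.2, (hmem p hp).2.2.symm⟩, hk.ne'⟩
    _ = Real.log k * Real.log N := by
        rw [← Finset.sum_mul, ArithmeticFunction.vonMangoldt_sum]

lemma sum_dirichletSqCoeff_vonMangoldt_sq_div_le {N : ℕ} (hN : 0 < N) :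
    ∑ k ∈ Finset.Ioc 0 (N ^ 2), dirichletSqCoeff vonMangoldt N k ^ 2 / k ≤
      8 * Real.log N ^ 4 := by
  have hlogN : 0 ≤ Real.log N := Real.log_natCast_nonneg N
  have hcoeff : ∀ k ∈ Finset.Ioc 0 (N ^ 2), dirichletSqCoeff vonMangoldt N k ≤ 2 * Real.log N ^ 2 :=
    fun k hk ↦ by
      have hlogk := log_le_log_of_mem_Ioc hk
      rw [Nat.cast_pow, Real.log_pow, Nat.cast_ofNat] at hlogk
      nlinarith [dirichletSqCoeff_vonMangoldt_le N (Finset.mem_Ioc.mp hk).1]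
  have : 0 ≤ ∑ n ∈ Finset.Ioc 0 N, vonMangoldt n / n :=
    Finset.sum_nonneg fun n _ ↦ div_nonneg vonMangoldt_nonneg n.cast_nonneg
  calc _ ≤ ∑ k ∈ Finset.Ioc 0 (N ^ 2),
          2 * Real.log N ^ 2 * (dirichletSqCoeff vonMangoldt N k * (k : ℝ)⁻¹) :=
        Finset.sum_le_sum fun k hk ↦ by
          rw [sq, mul_div_assoc, div_eq_mul_inv]
          exact mul_le_mul_of_nonneg_right (hcoeff k hk)
            (mul_nonneg (dirichletSqCoeff_vonMangoldt_nonneg N k) (by positivity))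
    _ = 2 * Real.log N ^ 2 * (∑ n ∈ Finset.Ioc 0 N, vonMangoldt n / n) ^ 2 := by
        rw [← Finset.mul_sum, sum_dirichletSqCoeff_mul _ (fun k ↦ (k : ℝ)⁻¹) N fun m n _ _ ↦ by
          rw [Nat.cast_mul, mul_inv]]
        simp_rw [div_eq_mul_inv]
    _ ≤ 2 * Real.log N ^ 2 * (2 * Real.log N) ^ 2 := by
        gcongr
        exact sum_vonMangoldt_div_le hN
    _ = 8 * Real.log N ^ 4 := by ring

lemma sum_dirichletSqCoeff_vonMangoldt_le (N : ℕ) :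
    ∑ k ∈ Finset.Ioc 0 (N ^ 2), dirichletSqCoeff vonMangoldt N k ≤ (N * Real.log N) ^ 2 := by
  have hsquare := sum_dirichletSqCoeff_mul (vonMangoldt ·) (fun _ ↦ (1 : ℝ)) N (by simp)
  simp only [mul_one] at hsquare
  rw [hsquare]
  have : 0 ≤ ∑ n ∈ Finset.Ioc 0 N, vonMangoldt n :=
    Finset.sum_nonneg fun _ _ ↦ vonMangoldt_nonneg
  gcongr
  calc ∑ n ∈ Finset.Ioc 0 N, vonMangoldt n ≤ ∑ _n ∈ Finset.Ioc 0 N, Real.log N :=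
        Finset.sum_le_sum fun _ hn ↦ vonMangoldt_le_log.trans (log_le_log_of_mem_Ioc hn)
    _ = N * Real.log N := by simp

lemma norm_dirichletSqCoeff_ofReal_vonMangoldt (N k : ℕ) :
    ‖dirichletSqCoeff (fun n ↦ (vonMangoldt n : ℂ)) N k‖ = dirichletSqCoeff vonMangoldt N k := by
  rw [← Complex.norm_of_nonneg (dirichletSqCoeff_vonMangoldt_nonneg N k)]
  simp [dirichletSqCoeff]

lemma fourthMoment_mangoldtPoly_le {N J : ℕ} {L σ : ℝ} (v : ℝ) (hN : 0 < N) (hL : 0 < L)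
    (hNL : Real.log N ≤ L) (hσ : 1 / 2 ≤ σ) (hJ : π * N ^ 6 * L ≤ J) :
    fourthMoment (mangoldtPoly N) L J σ v ≤ 9 * J * L ^ 4 := by
  have : 0 ≤ Real.log N := Real.log_natCast_nonneg N
  have hpow : ∀ k ∈ Finset.Ioc 0 (N ^ 2), (1 : ℝ) ≤ k := fun k hk ↦ by
    exact_mod_cast (Finset.mem_Ioc.mp hk).1
  have hmean := sum_norm_sq_dirichletPoly_le
    (dirichletSqCoeff (fun n ↦ (vonMangoldt n : ℂ)) N) J σ v (pow_pos hN 2) hL (by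
      rw [Nat.cast_pow, Real.log_pow, Nat.cast_ofNat]; nlinarith [Real.pi_gt_three])
  simp only [norm_dirichletSqCoeff_ofReal_vonMangoldt, ← dirichletPoly_sq, norm_pow,
    ← pow_mul] at hmean
  have hdiag : ∑ k ∈ Finset.Ioc 0 (N ^ 2),
      (dirichletSqCoeff vonMangoldt N k * (k : ℝ) ^ (-σ)) ^ 2 ≤ 8 * Real.log N ^ 4 := by
    refine (Finset.sum_le_sum fun k hk ↦ ?_).trans (sum_dirichletSqCoeff_vonMangoldt_sq_div_le hN)
    rw [mul_pow, div_eq_mul_inv, ← Real.rpow_natCast (_ ^ (-σ)),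
      ← Real.rpow_mul (Nat.cast_nonneg k), ← Real.rpow_neg_one]
    gcongr
    · exact hpow k hk
    · push_cast; linarith
  have htotal : ∑ k ∈ Finset.Ioc 0 (N ^ 2), dirichletSqCoeff vonMangoldt N k * (k : ℝ) ^ (-σ) ≤
      (N * Real.log N) ^ 2 :=
    (Finset.sum_le_sum fun k hk ↦ mul_le_of_le_one_right (dirichletSqCoeff_vonMangoldt_nonneg N k)
      (Real.rpow_le_one_of_one_le_of_nonpos (hpow k hk) (by linarith))).trans
        (sum_dirichletSqCoeff_vonMangoldt_le N)
  have htotal_nonneg : 0 ≤ ∑ k ∈ Finset.Ioc 0 (N ^ 2),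
      dirichletSqCoeff vonMangoldt N k * (k : ℝ) ^ (-σ) :=
    Finset.sum_nonneg fun k _ ↦ mul_nonneg (dirichletSqCoeff_vonMangoldt_nonneg N k) (by positivity)
  calc fourthMoment (mangoldtPoly N) L J σ v
      ≤ J * (8 * Real.log N ^ 4) + π * (N ^ 2 : ℕ) * L * ((N * Real.log N) ^ 2) ^ 2 :=
        hmean.trans (by gcongr)
    _ = 8 * J * Real.log N ^ 4 + π * N ^ 6 * L * Real.log N ^ 4 := by push_cast; ring
    _ ≤ 8 * J * L ^ 4 + J * L ^ 4 := by gcongr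
    _ = 9 * J * L ^ 4 := by ring

end VonMangoldt

section RightLine

open ArithmeticFunction (vonMangoldt vonMangoldt_nonneg vonMangoldt_le_log)

lemma logDeriv_entireZeta_eq_sub_LSeries {s : ℂ} (hs : 1 < s.re) :
    logDeriv entireZeta s = 1 / (s - 1) - LSeries (fun n ↦ (vonMangoldt n : ℂ)) s := by
  have hs1 : s ≠ 1 := fun h ↦ by simp [h] at hs
  have hζ : riemannZeta s ≠ 0 := riemannZeta_ne_zero_of_one_le_re hs.le
  have hfactor : entireZeta =ᶠ[nhds s] fun w ↦ (w - 1) * riemannZeta w := by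
    filter_upwards [isOpen_ne.mem_nhds hs1] with w hw using entireZeta_of_ne_one hw
  rw [logDeriv_apply, hfactor.deriv_eq, hfactor.eq_of_nhds, ← logDeriv_apply,
    logDeriv_mul (f := (· - 1)) s (sub_ne_zero.mpr hs1) hζ (by fun_prop)
      (differentiableAt_riemannZeta hs1),
    ArithmeticFunction.LSeries_vonMangoldt_eq_deriv_riemannZeta_div hs, logDeriv_apply,
    logDeriv_apply, deriv_sub_const, deriv_id'']
  ring

lemma mangoldtPoly_eq_sum_range_term (N : ℕ) (s : ℂ) :
    mangoldtPoly N s =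
      ∑ n ∈ Finset.range (N + 1), LSeries.term (fun n ↦ (vonMangoldt n : ℂ)) s n := by
  rw [mangoldtPoly, dirichletPoly]
  refine Finset.sum_subset_zero_on_sdiff (fun n hn ↦ ?_) (fun n hn ↦ ?_) fun n hn ↦ ?_
  · exact Finset.mem_range_succ_iff.mpr (Finset.mem_Ioc.mp hn).2
  · have hn0 : n = 0 := by
      simp only [Finset.mem_sdiff, Finset.mem_range, Finset.mem_Ioc] at hn
      lia
    rw [hn0, LSeries.term_zero]
  · rw [LSeries.term_of_ne_zero (Finset.mem_Ioc.mp hn).1.ne', Complex.cpow_neg, div_eq_mul_inv]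

lemma norm_term_vonMangoldt_le {n : ℕ} {s : ℂ} (hn : 0 < n) (hs : 4 ≤ s.re) :
    ‖LSeries.term (fun n ↦ (vonMangoldt n : ℂ)) s n‖ ≤ 1 / (n : ℝ) ^ 3 := by
  have hn1 : (1 : ℝ) ≤ n := by exact_mod_cast hn
  have hΛ : vonMangoldt n ≤ n := vonMangoldt_le_log.trans (Real.log_le_self n.cast_nonneg)
  have hpow : (n : ℝ) ^ 4 ≤ (n : ℝ) ^ s.re := by
    exact_mod_cast Real.rpow_le_rpow_of_exponent_le hn1 (y := (4 : ℕ)) (by exact_mod_cast hs)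
  rw [LSeries.norm_term_eq, if_neg hn.ne', Complex.norm_of_nonneg vonMangoldt_nonneg]
  calc vonMangoldt n / (n : ℝ) ^ s.re ≤ n / (n : ℝ) ^ 4 := by gcongr
    _ = 1 / (n : ℝ) ^ 3 := by field_simp

lemma norm_logDeriv_entireZeta_add_mangoldtPoly_le {N : ℕ} {s : ℂ} (hN : 0 < N) (hs : 4 ≤ s.re) :
    ‖logDeriv entireZeta s + mangoldtPoly N s‖ ≤ ‖1 / (s - 1)‖ + 2 / N := by
  set a : ℕ → ℂ := LSeries.term (fun n ↦ (vonMangoldt n : ℂ)) s with ha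
  have hs1 : 1 < s.re := by linarith
  have hsum : Summable a := ArithmeticFunction.LSeriesSummable_vonMangoldt hs1
  have htail : logDeriv entireZeta s + mangoldtPoly N s = 1 / (s - 1) - ∑' n, a (n + (N + 1)) := by
    rw [logDeriv_entireZeta_eq_sub_LSeries hs1, mangoldtPoly_eq_sum_range_term, LSeries,
      ← ha, ← hsum.sum_add_tsum_nat_add (N + 1)]
    ring
  have hzeta2 : HasSum (fun n : ℕ ↦ 1 / ((n : ℝ) + 1) ^ 2) (π ^ 2 / 6) := by
    simpa using (hasSum_nat_add_iff' 1).mpr hasSum_zeta_two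
  have hterm : ∀ n : ℕ, ‖a (n + (N + 1))‖ ≤ 1 / N * (1 / ((n : ℝ) + 1) ^ 2) := fun n ↦ by
    have : (0 : ℝ) < N := by exact_mod_cast hN
    refine (norm_term_vonMangoldt_le (by lia) hs).trans ?_
    rw [one_div_mul_one_div, pow_succ']
    gcongr <;> push_cast <;> linarith [n.cast_nonneg (α := ℝ)]
  have hpi : π ^ 2 / 6 ≤ 2 := by nlinarith [Real.pi_lt_d2, Real.pi_pos]
  calc _ ≤ ‖1 / (s - 1)‖ + ‖∑' n, a (n + (N + 1))‖ := htail ▸ norm_sub_le _ _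
    _ ≤ ‖1 / (s - 1)‖ + 1 / N * 2 := by
      gcongr
      exact (tsum_of_norm_bounded (hzeta2.mul_left _) hterm).trans (by gcongr)
    _ = ‖1 / (s - 1)‖ + 2 / N := by ring

lemma norm_one_div_le_of_le_abs_re {z : ℂ} {r : ℝ} (hr : 0 < r) (hz : r ≤ |z.re|) :
    ‖1 / z‖ ≤ 1 / r := by
  rw [norm_div, norm_one]
  exact one_div_le_one_div_of_le hr (hz.trans (Complex.abs_re_le_norm z))

lemma norm_one_div_le_of_le_abs_im {z : ℂ} {r : ℝ} (hr : 0 < r) (hz : r ≤ |z.im|) :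
    ‖1 / z‖ ≤ 1 / r := by
  rw [norm_div, norm_one]
  exact one_div_le_one_div_of_le hr (hz.trans (Complex.abs_im_le_norm z))

lemma card_filter_abs_sample_lt_le (J : ℕ) {L R : ℝ} (v : ℝ) (hL : 0 < L) (hR : 0 ≤ R) :
    ((Finset.range J).filter (fun j : ℕ ↦ |(j : ℝ) / L + v| < R)).card ≤ 2 * R * L + 1 := by
  have hsub : ((Finset.range J).filter (fun j : ℕ ↦ |(j : ℝ) / L + v| < R)).map
      Nat.castEmbedding ⊆ Finset.Icc ⌈(-R - v) * L⌉ ⌊(R - v) * L⌋ := by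
    intro z hz
    simp only [Finset.mem_map, Finset.mem_filter, Nat.castEmbedding_apply] at hz
    obtain ⟨j, ⟨_, hj⟩, rfl⟩ := hz
    rw [abs_lt] at hj
    rw [Finset.mem_Icc, Int.ceil_le, Int.le_floor, Int.cast_natCast, ← le_div_iff₀ hL,
      ← div_le_iff₀ hL]
    constructor <;> linarith
  have hcard := Finset.card_le_card hsub
  rw [Finset.card_map, Int.card_Icc] at hcard
  have hlength : (((⌊(R - v) * L⌋ + 1 - ⌈(-R - v) * L⌉).toNat : ℤ) : ℝ) ≤ 2 * R * L + 1 := by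
    rw [Int.toNat_eq_max]
    push_cast
    refine max_le ?_ (by positivity)
    linarith [Int.floor_le ((R - v) * L), Int.le_ceil ((-R - v) * L)]
  exact (Nat.cast_le.mpr hcard).trans (by exact_mod_cast hlength)

lemma fourthMoment_logDeriv_entireZeta_add_mangoldtPoly_le {N J : ℕ} {L : ℝ} (v : ℝ) (hN : 0 < N)
    (hL : 0 < L) (hJ : (2 * N * L + 1) * N ^ 4 ≤ J) :
    fourthMoment (fun s ↦ logDeriv entireZeta s + mangoldtPoly N s) L J 4 v ≤
      162 * J / N ^ 4 := by
  have hN1 : (1 : ℝ) ≤ N := by exact_mod_cast hN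
  have hpoint : ∀ u : ℝ, ‖logDeriv entireZeta ((4 : ℝ) + u * I) +
      mangoldtPoly N ((4 : ℝ) + u * I)‖ ^ 4 ≤ 81 / N ^ 4 + if |u| < N then 81 else 0 := fun u ↦ by
    refine (pow_le_pow_left₀ (norm_nonneg _)
      (norm_logDeriv_entireZeta_add_mangoldtPoly_le hN (by simp)) 4).trans ?_
    split_ifs with hu
    · have hpole : ‖1 / (((4 : ℝ) : ℂ) + u * I - 1)‖ ≤ 1 / 1 :=
        norm_one_div_le_of_le_abs_re one_pos (by norm_num)
      have htail : 2 / (N : ℝ) ≤ 2 := div_le_self zero_le_two hN1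
      calc _ ≤ (3 : ℝ) ^ 4 := by gcongr; linarith
        _ ≤ 81 / N ^ 4 + 81 := by norm_num; positivity
    · have hpole : ‖1 / (((4 : ℝ) : ℂ) + u * I - 1)‖ ≤ 1 / N :=
        norm_one_div_le_of_le_abs_im (by linarith) (by simpa using hu)
      calc _ ≤ (1 / (N : ℝ) + 2 / N) ^ 4 := by gcongr
        _ = 81 / N ^ 4 + 0 := by ring
  have hnear := (card_filter_abs_sample_lt_le J v hL N.cast_nonneg).trans
    ((le_div_iff₀ (by positivity)).mpr hJ)
  calc _ ≤ ∑ j ∈ Finset.range J, (81 / (N : ℝ) ^ 4 + if |(j : ℝ) / L + v| < N then 81 else 0) :=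
        Finset.sum_le_sum fun j _ ↦ hpoint _
    _ = J * (81 / (N : ℝ) ^ 4) +
          ((Finset.range J).filter fun j : ℕ ↦ |(j : ℝ) / L + v| < N).card * 81 := by
        rw [Finset.sum_add_distrib, Finset.sum_const, Finset.card_range, nsmul_eq_mul,
          ← Finset.sum_filter, Finset.sum_const, nsmul_eq_mul]
    _ ≤ J * (81 / (N : ℝ) ^ 4) + J / N ^ 4 * 81 := by gcongr
    _ = 162 * J / N ^ 4 := by ring

end RightLine

section ThreeLines

/-- The fourth moment damped by `exp (-2 v ^ 2) = |exp (s ^ 2)| ^ 2 / exp (2 σ ^ 2)`, `s = σ + i v`.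
The damping makes it bounded in `v`, so that convexity in `σ` applies. -/
def gaussianMoment (F : ℂ → ℂ) (L : ℝ) (J : ℕ) (σ v : ℝ) : ℝ :=
  Real.exp (-2 * v ^ 2) * fourthMoment F L J σ v

/-- The values `exp (s ^ 2 + κ s / 2) F(s + i j / L) ^ 2`, `j < J`, as a vector in `ℂ^J`: the
Euclidean norm turns a discrete fourth moment into the norm of one holomorphic function. -/
def sampleVector (F : ℂ → ℂ) (L κ : ℝ) (J : ℕ) (s : ℂ) : EuclideanSpace ℂ (Fin J) :=
  WithLp.toLp 2 fun j ↦ Complex.exp (s ^ 2 + κ / 2 * s) * F (s + (j / L : ℝ) * I) ^ 2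

variable {F G : ℂ → ℂ} {L σ : ℝ} {J : ℕ}

lemma fourthMoment_nonneg (v : ℝ) : 0 ≤ fourthMoment F L J σ v :=
  Finset.sum_nonneg fun _ _ ↦ by positivity

lemma gaussianMoment_nonneg (v : ℝ) : 0 ≤ gaussianMoment F L J σ v :=
  mul_nonneg (Real.exp_nonneg _) (fourthMoment_nonneg v)

lemma exp_neg_two_mul_sq_le_one (v : ℝ) : Real.exp (-2 * v ^ 2) ≤ 1 := by
  rw [Real.exp_le_one_iff]
  linarith [sq_nonneg v]

lemma gaussianMoment_le_fourthMoment (v : ℝ) :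
    gaussianMoment F L J σ v ≤ fourthMoment F L J σ v :=
  mul_le_of_le_one_left (fourthMoment_nonneg v) (exp_neg_two_mul_sq_le_one v)

lemma add_pow_four_le {a b : ℝ} (ha : 0 ≤ a) (hb : 0 ≤ b) :
    (a + b) ^ 4 ≤ 8 * a ^ 4 + 8 * b ^ 4 := by
  refine (add_pow_le ha hb 4).trans_eq ?_
  norm_num
  ring

lemma gaussianMoment_add_le (v : ℝ) :
    gaussianMoment (fun s ↦ F s + G s) L J σ v ≤
      8 * gaussianMoment F L J σ v + 8 * gaussianMoment G L J σ v := by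
  rw [gaussianMoment, gaussianMoment, gaussianMoment, mul_left_comm 8, mul_left_comm 8, ← mul_add]
  gcongr
  simp only [fourthMoment]
  rw [Finset.mul_sum, Finset.mul_sum, ← Finset.sum_add_distrib]
  exact Finset.sum_le_sum fun j _ ↦ (pow_le_pow_left₀ (norm_nonneg _) (norm_add_le _ _) 4).trans
    (add_pow_four_le (norm_nonneg _) (norm_nonneg _))

lemma gaussianMoment_neg (v : ℝ) :
    gaussianMoment (fun s ↦ -F s) L J σ v = gaussianMoment F L J σ v := by
  simp only [gaussianMoment, fourthMoment, norm_neg]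

lemma gaussianMoment_le_of_add (G : ℂ → ℂ) (v : ℝ) :
    gaussianMoment F L J σ v ≤
      8 * gaussianMoment (fun s ↦ F s + G s) L J σ v + 8 * gaussianMoment G L J σ v := by
  have h := gaussianMoment_add_le (F := fun s ↦ F s + G s) (G := fun s ↦ -G s)
    (L := L) (J := J) (σ := σ) v
  simpa only [add_neg_cancel_right, gaussianMoment_neg] using h

lemma exp_mul_add_abs_pow_four_le {a : ℝ} (ha : 0 ≤ a) (v : ℝ) :
    Real.exp (-2 * v ^ 2) * (a + |v|) ^ 4 ≤ 8 * (a ^ 4 + 1) := by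
  have hone := exp_neg_two_mul_sq_le_one v
  have hgauss : Real.exp (-2 * v ^ 2) * |v| ^ 4 ≤ 1 := by
    have hle : |v| ^ 4 ≤ Real.exp (2 * v ^ 2) := by
      rw [two_mul, Real.exp_add, ← sq, show |v| ^ 4 = (v ^ 2) ^ 2 by rw [← sq_abs v]; ring]
      gcongr
      linarith [Real.add_one_le_exp (v ^ 2)]
    rwa [neg_mul, Real.exp_neg, inv_mul_le_iff₀ (Real.exp_pos _), mul_one]
  calc _ ≤ Real.exp (-2 * v ^ 2) * (8 * a ^ 4 + 8 * |v| ^ 4) := by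
        gcongr
        exact add_pow_four_le ha (abs_nonneg v)
    _ = 8 * (Real.exp (-2 * v ^ 2) * a ^ 4 + Real.exp (-2 * v ^ 2) * |v| ^ 4) := by ring
    _ ≤ 8 * (1 * a ^ 4 + 1) := by gcongr
    _ = 8 * (a ^ 4 + 1) := by rw [one_mul]

lemma gaussianMoment_le_of_linear_growth {K : ℝ} (v : ℝ)
    (hF : ∀ t : ℝ, ‖F (σ + t * I)‖ ≤ K * (|t| + 1)) :
    gaussianMoment F L J σ v ≤
      ∑ j ∈ Finset.range J, K ^ 4 * (8 * ((|(j : ℝ) / L| + 1) ^ 4 + 1)) := by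
  rw [gaussianMoment, fourthMoment, Finset.mul_sum]
  refine Finset.sum_le_sum fun j _ ↦ ?_
  have hshift : |(j : ℝ) / L + v| + 1 ≤ |(j : ℝ) / L| + 1 + |v| := by
    linarith [abs_add_le ((j : ℝ) / L) v]
  calc _ ≤ Real.exp (-2 * v ^ 2) * (K * (|j / L + v| + 1)) ^ 4 := by
        gcongr
        exact hF _
    _ ≤ Real.exp (-2 * v ^ 2) * (K ^ 4 * (|(j : ℝ) / L| + 1 + |v|) ^ 4) := by
        rw [mul_pow]
        gcongr _ * (_ * ?_)
        exact pow_le_pow_left₀ (by positivity) hshift 4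
    _ = K ^ 4 * (Real.exp (-2 * v ^ 2) * (|(j : ℝ) / L| + 1 + |v|) ^ 4) := by ring
    _ ≤ K ^ 4 * (8 * ((|(j : ℝ) / L| + 1) ^ 4 + 1)) := by
        gcongr _ * ?_
        exact exp_mul_add_abs_pow_four_le (by positivity) v

lemma norm_sampleVector_sq (κ v : ℝ) :
    ‖sampleVector F L κ J (σ + v * I)‖ ^ 2 =
      Real.exp (2 * σ ^ 2 + κ * σ) * gaussianMoment F L J σ v := by
  have hre : (((σ : ℂ) + v * I) ^ 2 + κ / 2 * (σ + v * I)).re = σ ^ 2 - v ^ 2 + κ / 2 * σ := by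
    simp [sq]
  have hshift : ∀ j : ℕ, (σ : ℂ) + v * I + (j / L : ℝ) * I = σ + (j / L + v : ℝ) * I := fun j ↦ by
    push_cast; ring
  rw [EuclideanSpace.norm_sq_eq, gaussianMoment, fourthMoment, Finset.sum_range, ← mul_assoc,
    ← Real.exp_add, Finset.mul_sum]
  refine Finset.sum_congr rfl fun j _ ↦ ?_
  change ‖Complex.exp _ * F _ ^ 2‖ ^ 2 = _
  rw [norm_mul, mul_pow, norm_pow, ← pow_mul, Complex.norm_exp, ← Real.exp_nat_mul, hre, hshift]
  congr 2
  push_cast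
  ring

variable {a b : ℝ}

lemma diffContOnCl_sampleVector (κ : ℝ) (J : ℕ)
    (hF : ∀ s : ℂ, s.re ∈ Set.Icc a b → DifferentiableAt ℂ F s) :
    DiffContOnCl ℂ (sampleVector F L κ J) (Complex.re ⁻¹' Set.Ioo a b) := by
  have hdiff : DifferentiableOn ℂ (sampleVector F L κ J) (Complex.re ⁻¹' Set.Icc a b) := by
    intro s hs
    refine DifferentiableAt.differentiableWithinAt (differentiableAt_euclidean.mpr fun j ↦ ?_)
    have hFj : DifferentiableAt ℂ (fun w ↦ F (w + (j / L : ℝ) * I)) s :=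
      DifferentiableAt.comp (g := F) s (hF _ (by simpa using hs)) (by fun_prop)
    exact (by fun_prop : DifferentiableAt ℂ (fun w ↦ Complex.exp (w ^ 2 + κ / 2 * w)) s).mul
      (hFj.pow 2)
  exact (hdiff.mono (closure_minimal (Set.preimage_mono Set.Ioo_subset_Icc_self)
    (isClosed_Icc.preimage Complex.continuous_re))).diffContOnCl

lemma exists_norm_sampleVector_le {K : ℝ} (L κ : ℝ) (J : ℕ)
    (hgrowth : ∀ σ ∈ Set.Icc a b, ∀ t : ℝ, ‖F (σ + t * I)‖ ≤ K * (|t| + 1)) :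
    ∃ Q : ℝ, ∀ s : ℂ, s.re ∈ Set.Icc a b → ‖sampleVector F L κ J s‖ ≤ Q := by
  obtain ⟨q, hq⟩ := isCompact_Icc.exists_bound_of_continuousOn
    (f := fun σ : ℝ ↦ Real.exp (2 * σ ^ 2 + κ * σ)) (s := Set.Icc a b) (by fun_prop)
  refine ⟨√(q * ∑ j ∈ Finset.range J, K ^ 4 * (8 * ((|(j : ℝ) / L| + 1) ^ 4 + 1))), fun s hs ↦ ?_⟩
  refine Real.le_sqrt_of_sq_le ?_
  rw [← Complex.re_add_im s, norm_sampleVector_sq]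
  exact mul_le_mul ((Real.le_norm_self _).trans (hq s.re hs))
    (gaussianMoment_le_of_linear_growth s.im (hgrowth s.re hs)) (gaussianMoment_nonneg _)
    ((norm_nonneg _).trans (hq s.re hs))

lemma gaussianMoment_three_lines {K X R : ℝ} (κ v : ℝ) (hab : a < b)
    (hF : ∀ s : ℂ, s.re ∈ Set.Icc a b → DifferentiableAt ℂ F s)
    (hgrowth : ∀ σ ∈ Set.Icc a b, ∀ t : ℝ, ‖F (σ + t * I)‖ ≤ K * (|t| + 1))
    (hX : ∀ v, gaussianMoment F L J a v ≤ X) (hR : ∀ v, gaussianMoment F L J b v ≤ R)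
    (hσ : σ ∈ Set.Icc a b) :
    Real.exp (2 * σ ^ 2 + κ * σ) * gaussianMoment F L J σ v ≤
      Real.exp (2 * a ^ 2 + κ * a) * X + Real.exp (2 * b ^ 2 + κ * b) * R := by
  have hX0 : 0 ≤ X := (gaussianMoment_nonneg 0).trans (hX 0)
  have hR0 : 0 ≤ R := (gaussianMoment_nonneg 0).trans (hR 0)
  set M := Real.exp (2 * a ^ 2 + κ * a) * X + Real.exp (2 * b ^ 2 + κ * b) * R
  obtain ⟨Q, hQ⟩ := exists_norm_sampleVector_le L κ J hgrowth
  have hbound : ‖sampleVector F L κ J (σ + v * I)‖ ≤ √M := by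
    refine PhragmenLindelof.vertical_strip (diffContOnCl_sampleVector κ J hF) ?_ (fun z hz ↦ ?_)
      (fun z hz ↦ ?_) (by simpa using hσ.1) (by simpa using hσ.2)
    · refine ⟨0, div_pos Real.pi_pos (sub_pos.mpr hab), 0, Asymptotics.IsBigO.of_bound Q ?_⟩
      rw [Filter.eventually_inf_principal]
      refine Filter.Eventually.of_forall fun z hz ↦ ?_
      simpa using hQ z (Set.Ioo_subset_Icc_self hz)
    · refine Real.le_sqrt_of_sq_le ?_
      rw [← Complex.re_add_im z, hz, norm_sampleVector_sq]
      exact (mul_le_mul_of_nonneg_left (hX _) (Real.exp_nonneg _)).trans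
        (le_add_of_nonneg_right (by positivity))
    · refine Real.le_sqrt_of_sq_le ?_
      rw [← Complex.re_add_im z, hz, norm_sampleVector_sq]
      exact (mul_le_mul_of_nonneg_left (hR _) (Real.exp_nonneg _)).trans
        (le_add_of_nonneg_left (by positivity))
  rw [← norm_sampleVector_sq]
  exact (Real.le_sqrt (norm_nonneg _) (by positivity)).mp hbound

lemma gaussianMoment_le_exp_mul_add {K X R κ : ℝ} (v : ℝ) (hκ : 0 ≤ κ) (ha : 0 ≤ a) (hab : a < b)
    (hF : ∀ s : ℂ, s.re ∈ Set.Icc a b → DifferentiableAt ℂ F s)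
    (hgrowth : ∀ σ ∈ Set.Icc a b, ∀ t : ℝ, ‖F (σ + t * I)‖ ≤ K * (|t| + 1))
    (hX : ∀ v, gaussianMoment F L J a v ≤ X) (hR : ∀ v, gaussianMoment F L J b v ≤ R)
    (hσ : σ ∈ Set.Icc a b) :
    gaussianMoment F L J σ v ≤
      Real.exp (-(κ * (σ - a))) * X + Real.exp (2 * b ^ 2 + κ * b) * R := by
  have hX0 : 0 ≤ X := (gaussianMoment_nonneg 0).trans (hX 0)
  have hR0 : 0 ≤ R := (gaussianMoment_nonneg 0).trans (hR 0)
  have hthree := gaussianMoment_three_lines κ v hab hF hgrowth hX hR hσ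
  have hσ0 : 0 ≤ σ := ha.trans hσ.1
  have hsq : a ^ 2 ≤ σ ^ 2 := pow_le_pow_left₀ ha hσ.1 2
  rw [← le_div_iff₀' (Real.exp_pos _), add_div, mul_div_right_comm, mul_div_right_comm,
    ← Real.exp_sub, ← Real.exp_sub] at hthree
  refine hthree.trans ?_
  gcongr
  · linarith
  · have : 0 ≤ κ * σ := mul_nonneg hκ hσ0
    nlinarith

end ThreeLines

section FourthMoment

open ArithmeticFunction (vonMangoldt vonMangoldt_nonneg)

/-- The parameters of the mean value argument: `J` samples at spacing `1 / L` and a Dirichlet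
polynomial of length `N ≍ exp L`. The number of samples is large enough for the mean value theorem
while the sampled range stays polynomial in `exp L`. -/
structure SamplingScale (L : ℝ) (N J : ℕ) : Prop where
  one_le : 1 ≤ L
  length_pos : 0 < N
  log_length_le : Real.log N ≤ L
  exp_le : Real.exp L ≤ 2 * N
  le_card : π * N ^ 6 * L ≤ J
  logHeight_le : logHeight (J / L) ≤ 21 * L

variable {A L : ℝ} {N J : ℕ}

lemma exp_mul_sum_logHeight_pow_four_le (J : ℕ) (hL : 0 < L) (v : ℝ) :
    Real.exp (-2 * v ^ 2) * ∑ j ∈ Finset.range J, logHeight (j / L + v) ^ 4 ≤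
      J * (8 * (logHeight (J / L) ^ 4 + 1)) := by
  rw [Finset.mul_sum]
  refine (Finset.sum_le_card_nsmul _ _ (8 * (logHeight (J / L) ^ 4 + 1)) fun j hj ↦ ?_).trans_eq
    (by rw [Finset.card_range, nsmul_eq_mul])
  have hjJ : (j : ℝ) ≤ J := by exact_mod_cast (Finset.mem_range.mp hj).le
  have hmono : logHeight (j / L) ≤ logHeight (J / L) := logHeight_le_logHeight (by
    rw [abs_of_nonneg (by positivity), abs_of_nonneg (by positivity)]
    gcongr)
  calc _ ≤ Real.exp (-2 * v ^ 2) * (logHeight (J / L) + |v|) ^ 4 := by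
        have := one_le_logHeight (j / L + v)
        gcongr
        linarith [logHeight_add_le (j / L) v]
    _ ≤ 8 * (logHeight (J / L) ^ 4 + 1) :=
        exp_mul_add_abs_pow_four_le (zero_le_one.trans (one_le_logHeight _)) v

lemma differentiable_mangoldtPoly (N : ℕ) : Differentiable ℂ (mangoldtPoly N) := by
  unfold mangoldtPoly dirichletPoly
  refine Differentiable.fun_sum fun n hn ↦ ?_
  have hn0 : (n : ℂ) ≠ 0 := Nat.cast_ne_zero.mpr (Finset.mem_Ioc.mp hn).1.ne'
  exact (differentiable_neg.const_cpow (.inl hn0)).const_mul _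

lemma norm_mangoldtPoly_le (N : ℕ) {σ : ℝ} (t : ℝ) (hσ : 0 ≤ σ) :
    ‖mangoldtPoly N (σ + t * I)‖ ≤ ∑ n ∈ Finset.Ioc 0 N, vonMangoldt n := by
  rw [mangoldtPoly, dirichletPoly]
  refine (norm_sum_le _ _).trans (Finset.sum_le_sum fun n hn ↦ ?_)
  have hn0 : 0 < n := (Finset.mem_Ioc.mp hn).1
  rw [norm_mul, Complex.norm_of_nonneg vonMangoldt_nonneg, norm_natCast_cpow_neg hn0]
  exact mul_le_of_le_one_right vonMangoldt_nonneg
    (Real.rpow_le_one_of_one_le_of_nonpos (by exact_mod_cast hn0) (by linarith))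

lemma norm_logDeriv_entireZeta_le_linear (hRH : RiemannHypothesis) {σ : ℝ} (t : ℝ) (hL : 0 < L)
    (hσ : σ ∈ Set.Icc (1 / 2 + 1 / L) 4) :
    ‖logDeriv entireZeta (σ + t * I)‖ ≤ 60000 * (L + 1) * (|t| + 1) := by
  have hL' : 0 < 1 / L := by positivity
  have hσ' : 1 / 2 < σ := by linarith [hσ.1]
  have hdist : 1 / (σ - 1 / 2) ≤ L := by
    rw [one_div_le (by linarith) hL]
    linarith [hσ.1]
  have hheight := logHeight_le_two_mul t
  have := one_le_logHeight t
  calc _ ≤ 30000 * (1 / (σ - 1 / 2) + 1) * logHeight t := norm_logDeriv_entireZeta_le hRH t hσ' hσ.2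
    _ ≤ 30000 * (L + 1) * (2 * (|t| + 1)) := by gcongr
    _ = 60000 * (L + 1) * (|t| + 1) := by ring

lemma norm_logDeriv_entireZeta_add_mangoldtPoly_le_linear (hRH : RiemannHypothesis) (N : ℕ) {σ : ℝ}
    (t : ℝ) (hL : 0 < L) (hσ : σ ∈ Set.Icc (1 / 2 + 1 / L) 4) :
    ‖logDeriv entireZeta (σ + t * I) + mangoldtPoly N (σ + t * I)‖ ≤
      (60000 * (L + 1) + ∑ n ∈ Finset.Ioc 0 N, vonMangoldt n) * (|t| + 1) := by
  have hL' : 0 < 1 / L := by positivity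
  have hΛ : 0 ≤ ∑ n ∈ Finset.Ioc 0 N, vonMangoldt n :=
    Finset.sum_nonneg fun _ _ ↦ vonMangoldt_nonneg
  refine (norm_add_le _ _).trans ?_
  rw [add_mul]
  exact add_le_add (norm_logDeriv_entireZeta_le_linear hRH t hL hσ)
    ((norm_mangoldtPoly_le N t (by linarith [hσ.1])).trans
      (le_mul_of_one_le_right hΛ (by linarith [abs_nonneg t])))

/-- The constant in the bound of the error moment on the line `σ = 1 / 2 + 1 / L`. -/
def leftLineConst (A : ℝ) : ℝ := 64 * (60000 * A) ^ 4 * (8 * (21 ^ 4 + 1)) + 72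

/-- The constant in the fourth moment of `logDeriv entireZeta` on the line `σ = 1 / 2 + A / L`. -/
def fourthMomentConst (A : ℝ) : ℝ := 8 * leftLineConst A + 8 * (Real.exp 32 * 2592) + 72

lemma gaussianMoment_logDeriv_le_mul (hRH : RiemannHypothesis) (J : ℕ) (v : ℝ) (hL : 0 < L)
    (hA : 1 ≤ A) (hAL : A ≤ L) :
    gaussianMoment (logDeriv entireZeta) L J (1 / 2 + 1 / L) v ≤
      8 * A ^ 4 * gaussianMoment (logDeriv entireZeta) L J (1 / 2 + A / L) v +
        8 * (60000 * A) ^ 4 * (J * (8 * (logHeight (J / L) ^ 4 + 1))) := by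
  have hpoint : fourthMoment (logDeriv entireZeta) L J (1 / 2 + 1 / L) v ≤
      8 * A ^ 4 * fourthMoment (logDeriv entireZeta) L J (1 / 2 + A / L) v +
        8 * (60000 * A) ^ 4 * ∑ j ∈ Finset.range J, logHeight (j / L + v) ^ 4 := by
    simp only [fourthMoment]
    rw [Finset.mul_sum, Finset.mul_sum, ← Finset.sum_add_distrib]
    refine Finset.sum_le_sum fun j _ ↦ ?_
    have hscale := norm_logDeriv_le_mul_norm_logDeriv_add hRH (a := 1 / L) (j / L + v)
      (by positivity) hA (by rwa [mul_one_div, div_le_one hL])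
    rw [mul_one_div] at hscale
    have := one_le_logHeight (j / L + v)
    refine (pow_le_pow_left₀ (norm_nonneg _) hscale 4).trans
      ((add_pow_four_le (by positivity) (by positivity)).trans_eq ?_)
    ring
  calc _ ≤ Real.exp (-2 * v ^ 2) * _ := mul_le_mul_of_nonneg_left hpoint (Real.exp_nonneg _)
    _ = 8 * A ^ 4 * gaussianMoment (logDeriv entireZeta) L J (1 / 2 + A / L) v +
          8 * (60000 * A) ^ 4 *
            (Real.exp (-2 * v ^ 2) * ∑ j ∈ Finset.range J, logHeight (j / L + v) ^ 4) := by
        rw [gaussianMoment]; ring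
    _ ≤ _ := by
        gcongr _ + _ * ?_
        exact exp_mul_sum_logHeight_pow_four_le J hL v

namespace SamplingScale

lemma pos (h : SamplingScale L N J) : 0 < L := zero_lt_one.trans_le h.one_le

lemma gaussianMoment_mangoldtPoly_le (h : SamplingScale L N J) {σ : ℝ} (v : ℝ) (hσ : 1 / 2 ≤ σ) :
    gaussianMoment (mangoldtPoly N) L J σ v ≤ 9 * J * L ^ 4 :=
  (gaussianMoment_le_fourthMoment v).trans
    (fourthMoment_mangoldtPoly_le v h.length_pos h.pos h.log_length_le hσ h.le_card)

lemma gaussianMoment_left_le (hRH : RiemannHypothesis) (h : SamplingScale L N J) (v : ℝ)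
    (hA : 1 ≤ A) (hAL : A ≤ L) :
    gaussianMoment (fun s ↦ logDeriv entireZeta s + mangoldtPoly N s) L J (1 / 2 + 1 / L) v ≤
      64 * A ^ 4 * gaussianMoment (logDeriv entireZeta) L J (1 / 2 + A / L) v +
        leftLineConst A * J * L ^ 4 := by
  have hlog : logHeight (J / L) ^ 4 + 1 ≤ (21 ^ 4 + 1) * L ^ 4 := by
    have hheight : logHeight (J / L) ^ 4 ≤ (21 * L) ^ 4 :=
      pow_le_pow_left₀ (zero_le_one.trans (one_le_logHeight _)) h.logHeight_le 4
    have hone : 1 ≤ L ^ 4 := one_le_pow₀ h.one_le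
    linarith
  have : 0 < 1 / L := one_div_pos.mpr h.pos
  calc _ ≤ 8 * gaussianMoment (logDeriv entireZeta) L J (1 / 2 + 1 / L) v +
          8 * gaussianMoment (mangoldtPoly N) L J (1 / 2 + 1 / L) v := gaussianMoment_add_le v
    _ ≤ 8 * (8 * A ^ 4 * gaussianMoment (logDeriv entireZeta) L J (1 / 2 + A / L) v +
          8 * (60000 * A) ^ 4 * (J * (8 * ((21 ^ 4 + 1) * L ^ 4)))) + 8 * (9 * J * L ^ 4) := by
        gcongr
        · refine (gaussianMoment_logDeriv_le_mul hRH J v h.pos hA hAL).trans ?_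
          gcongr
        · exact h.gaussianMoment_mangoldtPoly_le v (by linarith)
    _ = _ := by rw [leftLineConst]; ring

lemma gaussianMoment_right_le (h : SamplingScale L N J) (v : ℝ) :
    gaussianMoment (fun s ↦ logDeriv entireZeta s + mangoldtPoly N s) L J 4 v ≤
      162 * J / N ^ 4 := by
  have hN : (1 : ℝ) ≤ N := by exact_mod_cast h.length_pos
  have hNL : 1 ≤ (N : ℝ) * L := one_le_mul_of_one_le_of_one_le hN h.one_le
  have := h.pos
  have hJ : (2 * N * L + 1) * (N : ℝ) ^ 4 ≤ J := calc
    (2 * N * L + 1) * (N : ℝ) ^ 4 ≤ 3 * (N * L) * (N : ℝ) ^ 4 := by gcongr; linarith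
    _ = 3 * (N : ℝ) ^ 5 * L := by ring
    _ ≤ π * N ^ 6 * L := by
      gcongr
      exacts [Real.pi_gt_three.le, by norm_num]
    _ ≤ J := h.le_card
  exact (gaussianMoment_le_fourthMoment v).trans
    (fourthMoment_logDeriv_entireZeta_add_mangoldtPoly_le v h.length_pos h.pos hJ)

lemma exp_mul_right_le (h : SamplingScale L N J) :
    Real.exp (32 + 4 * L) * (162 * J / (N : ℝ) ^ 4) ≤ Real.exp 32 * 2592 * J * L ^ 4 := by
  have : (0 : ℝ) < N := by exact_mod_cast h.length_pos
  have hexp : Real.exp (4 * L) ≤ (2 * N) ^ 4 := by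
    rw [← Nat.cast_ofNat, Real.exp_nat_mul]
    exact pow_le_pow_left₀ (Real.exp_nonneg _) h.exp_le 4
  rw [Real.exp_add]
  calc _ ≤ Real.exp 32 * (2 * N) ^ 4 * (162 * J / (N : ℝ) ^ 4) := by gcongr
    _ = Real.exp 32 * 2592 * J := by field_simp; ring
    _ ≤ Real.exp 32 * 2592 * J * L ^ 4 :=
        le_mul_of_one_le_right (by positivity) (one_le_pow₀ h.one_le)

-- The factor `exp (1 - A)` gained by convexity beats the factor `64 A ^ 4` lost on the left line.
lemma gaussianMoment_logDeriv_le_half_add (hRH : RiemannHypothesis) (h : SamplingScale L N J)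
    (hA : 1 ≤ A) (hAL : A ≤ L) (hdecay : 512 * A ^ 4 * Real.exp (-(A - 1)) ≤ 1 / 2) {Y : ℝ}
    (hY : ∀ v, gaussianMoment (logDeriv entireZeta) L J (1 / 2 + A / L) v ≤ Y) (v : ℝ) :
    gaussianMoment (logDeriv entireZeta) L J (1 / 2 + A / L) v ≤
      Y / 2 + fourthMomentConst A * J * L ^ 4 := by
  have hL := h.pos
  have hinv : 0 < 1 / L := one_div_pos.mpr hL
  have hle : 1 / L ≤ A / L := by gcongr
  have hAL1 : A / L ≤ 1 := (div_le_one hL).mpr hAL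
  have hY0 : 0 ≤ Y := (gaussianMoment_nonneg 0).trans (hY 0)
  have hgap : L * (1 / 2 + A / L - (1 / 2 + 1 / L)) = A - 1 := by field_simp; ring
  have hthree := gaussianMoment_le_exp_mul_add (σ := 1 / 2 + A / L)
    (F := fun s ↦ logDeriv entireZeta s + mangoldtPoly N s) v hL.le (by positivity)
    (show 1 / 2 + 1 / L < 4 by linarith)
    (fun s hs ↦ (differentiableAt_logDeriv_entireZeta hRH (by linarith [hs.1])).add
      (differentiable_mangoldtPoly N s))
    (fun σ hσ t ↦ norm_logDeriv_entireZeta_add_mangoldtPoly_le_linear hRH N t hL hσ)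
    (fun v ↦ (h.gaussianMoment_left_le hRH v hA hAL).trans
      (add_le_add_left (mul_le_mul_of_nonneg_left (hY v) (by positivity)) _))
    h.gaussianMoment_right_le ⟨by linarith, by linarith⟩
  rw [hgap] at hthree
  have hleft : Real.exp (-(A - 1)) * (64 * A ^ 4 * Y + leftLineConst A * J * L ^ 4) ≤
      Y / 16 + leftLineConst A * J * L ^ 4 := by
    have hone : Real.exp (-(A - 1)) ≤ 1 := Real.exp_le_one_iff.mpr (by linarith)
    have hconst : 0 ≤ leftLineConst A * J * L ^ 4 := by unfold leftLineConst; positivity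
    linarith [mul_le_mul_of_nonneg_right hdecay hY0, mul_le_mul_of_nonneg_right hone hconst]
  have hright := h.exp_mul_right_le
  have hpoly := h.gaussianMoment_mangoldtPoly_le v (show 1 / 2 ≤ 1 / 2 + A / L by linarith)
  have hsplit := gaussianMoment_le_of_add (F := logDeriv entireZeta) (L := L) (J := J)
    (σ := 1 / 2 + A / L) (mangoldtPoly N) v
  norm_num only at hthree
  rw [mul_comm L 4] at hthree
  rw [fourthMomentConst]
  linarith

end SamplingScale

lemma le_two_mul_of_forall_le_half_add {ι : Type*} {f : ι → ℝ} {c : ℝ}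
    (hbdd : BddAbove (Set.range f))
    (hstep : ∀ Y, (∀ i, f i ≤ Y) → ∀ i, f i ≤ Y / 2 + c) (i : ι) : f i ≤ 2 * c := by
  have : Nonempty ι := ⟨i⟩
  have hsup : ⨆ i, f i ≤ (⨆ i, f i) / 2 + c := ciSup_le (hstep _ (le_ciSup hbdd))
  linarith [le_ciSup hbdd i]

theorem fourthMoment_logDeriv_entireZeta_le (hRH : RiemannHypothesis) (h : SamplingScale L N J)
    (hA : 1 ≤ A) (hAL : A ≤ L) (hdecay : 512 * A ^ 4 * Real.exp (-(A - 1)) ≤ 1 / 2) :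
    fourthMoment (logDeriv entireZeta) L J (1 / 2 + A / L) 0 ≤
      2 * (fourthMomentConst A * J * L ^ 4) := by
  have hL := h.pos
  have hstrip : 1 / 2 + A / L ∈ Set.Icc (1 / 2 + 1 / L) 4 := by
    have hle : 1 / L ≤ A / L := by gcongr
    have hAL1 : A / L ≤ 1 := (div_le_one hL).mpr hAL
    exact ⟨by linarith, by linarith⟩
  have hbdd : BddAbove (Set.range (gaussianMoment (logDeriv entireZeta) L J (1 / 2 + A / L))) :=
    ⟨_, Set.forall_mem_range.mpr fun v ↦ gaussianMoment_le_of_linear_growth v fun t ↦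
      norm_logDeriv_entireZeta_le_linear hRH t hL hstrip⟩
  have hzero := le_two_mul_of_forall_le_half_add hbdd
    (fun _ ↦ h.gaussianMoment_logDeriv_le_half_add hRH hA hAL hdecay) 0
  simpa [gaussianMoment] using hzero

end FourthMoment

section Counting

variable {A L T b δ : ℝ} {N J : ℕ}

lemma finite_zetaOrds (T : ℝ) : (zetaOrds T).Finite := by
  let critical : ℝ → ℂ := fun γ ↦ 1 / 2 + γ * I
  have hcompact : IsCompact (critical '' Set.Icc 0 T) := isCompact_Icc.image (by fun_prop)
  refine Set.Finite.of_finite_image (f := critical)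
    (hcompact.inter_riemannZetaZeros_finite.subset ?_) fun γ _ γ' _ h ↦ ?_
  · rintro _ ⟨γ, hγ, rfl⟩
    exact ⟨⟨γ, ⟨hγ.1.le, hγ.2.1⟩, rfl⟩, hγ.2.2⟩
  · simpa [critical] using h

/-- The finite set of distinct ordinates in `(0, T]`. -/
def zetaOrdsFinset (T : ℝ) : Finset ℝ := (finite_zetaOrds T).toFinset

/-- The distinct ordinates in `(0, T]` followed by another ordinate at distance at most `δ`. -/
def smallGapOrds (T δ : ℝ) : Finset ℝ := {γ ∈ zetaOrdsFinset T | nextOrd γ - γ ≤ δ}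

lemma mem_zetaOrdsFinset {γ : ℝ} : γ ∈ zetaOrdsFinset T ↔ γ ∈ zetaOrds T :=
  (finite_zetaOrds T).mem_toFinset

lemma zetaN_eq_sum (T : ℝ) : zetaN T = ∑ γ ∈ zetaOrdsFinset T, ordMult γ :=
  finsum_mem_eq_finite_toFinset_sum _ _

lemma Dcount_eq_sum (lam T : ℝ) :
    Dcount lam T = ∑ γ ∈ zetaOrdsFinset T,
      ((ordMult γ - 1) + if nextOrd γ - γ ≤ 2 * π * lam / Real.log T then 1 else 0) :=
  finsum_mem_eq_finite_toFinset_sum _ _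

lemma Ddcount_eq_card_smallGapOrds (lam T : ℝ) :
    Ddcount lam T = (smallGapOrds T (2 * π * lam / Real.log T)).card := by
  rw [Ddcount, Nat.card_coe_set_eq, ← Set.ncard_coe_finset]
  congr 1
  ext γ
  simp [smallGapOrds, mem_zetaOrdsFinset]

lemma pairCount_eq_sum (T δ : ℝ) :
    pairCount T δ = ∑ p ∈ zetaOrdsFinset T ×ˢ zetaOrdsFinset T with
      0 < |p.1 - p.2| ∧ |p.1 - p.2| ≤ δ, ordMult p.1 * ordMult p.2 := by
  rw [pairCount, ← finsum_mem_coe_finset]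
  simp only [Finset.coe_filter, Finset.mem_product, mem_zetaOrdsFinset, and_assoc]

lemma Ddcount_le_Dcount (lam T : ℝ) : Ddcount lam T ≤ Dcount lam T := by
  rw [Ddcount_eq_card_smallGapOrds, Dcount_eq_sum, smallGapOrds, Finset.card_filter]
  exact Finset.sum_le_sum fun γ _ ↦ Nat.le_add_left _ _

lemma Ddcount_le_zetaN (lam T : ℝ) : Ddcount lam T ≤ zetaN T := by
  rw [Ddcount_eq_card_smallGapOrds, zetaN_eq_sum, smallGapOrds, Finset.card_filter]
  refine Finset.sum_le_sum fun γ hγ ↦ ?_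
  have hpos : 0 < ordMult γ := ordMult_pos (mem_zetaOrdsFinset.mp hγ).2.2
  split_ifs <;> omega

lemma Ddprop_nonneg (lam T : ℝ) : 0 ≤ Ddprop lam T := by
  unfold Ddprop
  positivity

lemma Ddprop_le_Dprop (lam T : ℝ) : Ddprop lam T ≤ Dprop lam T := by
  unfold Ddprop Dprop
  gcongr
  exact Ddcount_le_Dcount lam T

lemma nextOrd_le {γ γ' : ℝ} (hlt : γ < γ') (hzero : riemannZeta (1 / 2 + γ' * I) = 0) :
    nextOrd γ ≤ γ' :=
  csInf_le ⟨γ, fun _ hx ↦ hx.1.le⟩ ⟨hlt, hzero⟩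

/-- The number of zeros, with multiplicity, whose ordinate lies in `(0, T]` and within `b` of the
sample point `j / L`. -/
def windowCount (T b L : ℝ) (j : ℕ) : ℕ :=
  ∑ γ ∈ zetaOrdsFinset T with |γ - j / L| ≤ b, ordMult γ

/-- The constant in the bound for the fourth moment of `windowCount` with half-width `A / L`. -/
def windowConst (A : ℝ) : ℝ := 16 * A ^ 4 * (16 * fourthMomentConst A + 8 * 630000 ^ 4)

lemma windowConst_pos (hA : 0 < A) : 0 < windowConst A := by
  unfold windowConst fourthMomentConst leftLineConst
  positivity

lemma windowCount_pow_four_le (hRH : RiemannHypothesis) (T : ℝ) (h : SamplingScale L N J)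
    (hb : 0 < b) (hb1 : b ≤ 1) {j : ℕ} (hj : j ∈ Finset.range J) :
    (windowCount T b L j : ℝ) ^ 4 ≤
      128 * b ^ 4 * ‖logDeriv entireZeta ((1 / 2 + b : ℝ) + (j / L : ℝ) * I)‖ ^ 4 +
        128 * b ^ 4 * (630000 * L) ^ 4 := by
  have hL := h.pos
  have hjJ : (j : ℝ) ≤ J := by exact_mod_cast (Finset.mem_range.mp hj).le
  have hheight : logHeight (j / L) ≤ 21 * L := (logHeight_le_logHeight (by
    rw [abs_of_nonneg (by positivity), abs_of_nonneg (by positivity)]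
    gcongr)).trans h.logHeight_le
  set F : ℝ := ‖logDeriv entireZeta ((1 / 2 + b : ℝ) + (j / L : ℝ) * I)‖
  have hcount : (windowCount T b L j : ℝ) ≤ 2 * b * (F + 30000 * logHeight (j / L)) := by
    rw [windowCount, Nat.cast_sum]
    refine sum_ordMult_le_norm_logDeriv hRH hb hb1 fun γ hγ ↦ ?_
    obtain ⟨hmem, hdist⟩ := Finset.mem_filter.mp hγ
    exact ⟨(mem_zetaOrdsFinset.mp hmem).2.2, hdist⟩
  calc (windowCount T b L j : ℝ) ^ 4 ≤ (2 * b * (F + 630000 * L)) ^ 4 := by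
        gcongr
        exact hcount.trans (mul_le_mul_of_nonneg_left (by linarith) (by positivity))
    _ = 16 * b ^ 4 * (F + 630000 * L) ^ 4 := by ring
    _ ≤ 16 * b ^ 4 * (8 * F ^ 4 + 8 * (630000 * L) ^ 4) := by
        gcongr
        exact add_pow_four_le (norm_nonneg _) (by positivity)
    _ = 128 * b ^ 4 * F ^ 4 + 128 * b ^ 4 * (630000 * L) ^ 4 := by ring

theorem sum_windowCount_pow_four_le (hRH : RiemannHypothesis) (T : ℝ) (h : SamplingScale L N J)
    (hA : 1 ≤ A) (hAL : A ≤ L) (hdecay : 512 * A ^ 4 * Real.exp (-(A - 1)) ≤ 1 / 2) :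
    ∑ j ∈ Finset.range J, (windowCount T (A / L) L j : ℝ) ^ 4 ≤ windowConst A * J := by
  have hL := h.pos
  have hmoment := fourthMoment_logDeriv_entireZeta_le hRH h hA hAL hdecay
  simp only [fourthMoment, add_zero] at hmoment
  refine (Finset.sum_le_sum fun j ↦ windowCount_pow_four_le hRH T h (by positivity)
    ((div_le_one hL).mpr hAL)).trans ?_
  rw [Finset.sum_add_distrib, ← Finset.mul_sum, Finset.sum_const, Finset.card_range, nsmul_eq_mul]
  calc _ ≤ 128 * (A / L) ^ 4 * (2 * (fourthMomentConst A * J * L ^ 4)) +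
        J * (128 * (A / L) ^ 4 * (630000 * L) ^ 4) := by gcongr
    _ = windowConst A * J := by
        rw [windowConst]
        field_simp
        ring

lemma natFloor_mul_div_le {γ : ℝ} (hL : 0 < L) (hγ : 0 ≤ γ) : (⌊γ * L⌋₊ : ℝ) / L ≤ γ :=
  (div_le_iff₀ hL).mpr (Nat.floor_le (by positivity))

lemma le_natFloor_mul_div_add (γ : ℝ) (hL : 0 < L) : γ ≤ (⌊γ * L⌋₊ : ℝ) / L + 1 / L := by
  rw [← add_div, le_div_iff₀ hL]
  exact (Nat.lt_floor_add_one (γ * L)).le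

lemma natFloor_mul_mem_range {γ : ℝ} (hL : 0 < L) (hJ : T * L < J) (hγ : γ ∈ zetaOrdsFinset T) :
    ⌊γ * L⌋₊ ∈ Finset.range J := by
  obtain ⟨hpos, hle, -⟩ := mem_zetaOrdsFinset.mp hγ
  rw [Finset.mem_range, Nat.floor_lt (by positivity)]
  exact (mul_le_mul_of_nonneg_right hle hL.le).trans_lt hJ

lemma zetaN_le_sum_windowCount_pow_four (hL : 0 < L) (hb : 1 / L ≤ b) (hJ : T * L < J) :
    zetaN T ≤ ∑ j ∈ Finset.range J, windowCount T b L j ^ 4 := by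
  rw [zetaN_eq_sum, ← Finset.sum_fiberwise_of_maps_to fun γ ↦ natFloor_mul_mem_range hL hJ]
  refine Finset.sum_le_sum fun j _ ↦ le_trans ?_ (Nat.le_self_pow four_ne_zero _)
  refine Finset.sum_le_sum_of_subset (Finset.monotone_filter_right _ fun γ hγ hj ↦ ?_)
  have hlower := natFloor_mul_div_le hL (mem_zetaOrdsFinset.mp hγ).1.le
  have hupper := le_natFloor_mul_div_add γ hL
  rw [hj] at hlower hupper
  have hinv : 0 < 1 / L := by positivity
  exact abs_le.mpr ⟨by linarith, by linarith⟩

lemma min_mem_smallGapOrds {γ γ' : ℝ} (hγ : γ ∈ zetaOrdsFinset T) (hγ' : γ' ∈ zetaOrdsFinset T)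
    (hne : 0 < |γ - γ'|) (hclose : |γ - γ'| ≤ δ) : min γ γ' ∈ smallGapOrds T δ := by
  wlog hlt : γ < γ' generalizing γ γ'
  · rw [abs_sub_comm] at hne hclose
    have hlt' : γ' < γ := (not_lt.mp hlt).lt_of_ne' fun h ↦ by simp [h] at hne
    rw [min_comm]
    exact this hγ' hγ hne hclose hlt'
  · rw [min_eq_left hlt.le]
    have hnext := nextOrd_le hlt (mem_zetaOrdsFinset.mp hγ').2.2
    exact Finset.mem_filter.mpr ⟨hγ, by linarith [(abs_le.mp hclose).1]⟩

lemma abs_sub_le_of_natFloor_min {γ γ' : ℝ} {j : ℕ} (hL : 0 < L) (hγ : 0 ≤ γ) (hγ' : 0 ≤ γ')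
    (hb : 1 / L + δ ≤ b) (hclose : |γ - γ'| ≤ δ) (hj : ⌊min γ γ' * L⌋₊ = j) :
    |γ - j / L| ≤ b := by
  have hlower := natFloor_mul_div_le hL (le_min hγ hγ')
  have hupper := le_natFloor_mul_div_add (min γ γ') hL
  rw [hj] at hlower hupper
  have hinv : 0 < 1 / L := by positivity
  have hle := min_le_left γ γ'
  have hge : γ ≤ min γ γ' + δ := by
    rcases min_choice γ γ' with h | h <;> rw [h] <;>
      linarith [(abs_le.mp hclose).2, (abs_nonneg _).trans hclose]
  exact abs_le.mpr ⟨by linarith [(abs_nonneg _).trans hclose], by linarith⟩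

-- A close pair is charged to the window of its smaller member, which is followed by a small gap.
lemma pairCount_le_sum_windowCount_sq (hL : 0 < L) (hb : 1 / L + δ ≤ b) :
    pairCount T δ ≤
      ∑ j ∈ (smallGapOrds T δ).image (fun γ ↦ ⌊γ * L⌋₊), windowCount T b L j ^ 2 := by
  have hmaps : ∀ p ∈ ({p ∈ zetaOrdsFinset T ×ˢ zetaOrdsFinset T |
      0 < |p.1 - p.2| ∧ |p.1 - p.2| ≤ δ} : Finset (ℝ × ℝ)),
      ⌊min p.1 p.2 * L⌋₊ ∈ (smallGapOrds T δ).image (fun γ ↦ ⌊γ * L⌋₊) := by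
    intro p hp
    obtain ⟨hp, hne, hclose⟩ := Finset.mem_filter.mp hp
    obtain ⟨hmem, hmem'⟩ := Finset.mem_product.mp hp
    exact Finset.mem_image_of_mem _ (min_mem_smallGapOrds hmem hmem' hne hclose)
  rw [pairCount_eq_sum, ← Finset.sum_fiberwise_of_maps_to hmaps]
  refine Finset.sum_le_sum fun j _ ↦ ?_
  rw [windowCount, sq, Finset.sum_mul_sum, ← Finset.sum_product']
  refine Finset.sum_le_sum_of_subset fun p hp ↦ ?_
  obtain ⟨hp, hj⟩ := Finset.mem_filter.mp hp
  obtain ⟨hp, -, hclose⟩ := Finset.mem_filter.mp hp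
  obtain ⟨hmem, hmem'⟩ := Finset.mem_product.mp hp
  have hpos := (mem_zetaOrdsFinset.mp hmem).1.le
  have hpos' := (mem_zetaOrdsFinset.mp hmem').1.le
  refine Finset.mem_product.mpr
    ⟨Finset.mem_filter.mpr ⟨hmem, ?_⟩, Finset.mem_filter.mpr ⟨hmem', ?_⟩⟩
  · exact abs_sub_le_of_natFloor_min hL hpos hpos' hb hclose hj
  · exact abs_sub_le_of_natFloor_min hL hpos' hpos hb (abs_sub_comm p.1 p.2 ▸ hclose)
      (min_comm p.1 p.2 ▸ hj)

theorem pairCount_sq_le (hL : 0 < L) (hb : 1 / L + δ ≤ b) (hJ : T * L < J) :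
    pairCount T δ ^ 2 ≤
      (smallGapOrds T δ).card * ∑ j ∈ Finset.range J, windowCount T b L j ^ 4 := by
  set indices := (smallGapOrds T δ).image (fun γ ↦ ⌊γ * L⌋₊)
  have hsub : indices ⊆ Finset.range J := Finset.image_subset_iff.mpr fun γ hγ ↦
    natFloor_mul_mem_range hL hJ (Finset.filter_subset _ _ hγ)
  calc pairCount T δ ^ 2 ≤ (∑ j ∈ indices, windowCount T b L j ^ 2) ^ 2 := by
        gcongr
        exact pairCount_le_sum_windowCount_sq hL hb
    _ ≤ indices.card * ∑ j ∈ indices, (windowCount T b L j ^ 2) ^ 2 := sq_sum_le_card_mul_sum_sq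
    _ = indices.card * ∑ j ∈ indices, windowCount T b L j ^ 4 := by simp only [← pow_mul]
    _ ≤ _ := Nat.mul_le_mul Finset.card_image_le (Finset.sum_le_sum_of_subset hsub)

end Counting

section Conclusion

lemma le_mul_rpow_of_sq_le {P d n H θ : ℝ} (hd : 0 ≤ d) (hdn : d ≤ n) (hnH : n ≤ H)
    (hP : P ^ 2 ≤ d * H) (hθ : θ ∈ Set.Icc 0 (1 / 2)) : P ≤ H * (d / n) ^ θ := by
  have hn : 0 ≤ n := hd.trans hdn
  have hH : 0 ≤ H := hn.trans hnH
  have hsq : P ^ 2 ≤ d / n * H ^ 2 :=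
    calc P ^ 2 ≤ d / n * n * H := by
          rwa [div_mul_cancel_of_imp fun h ↦ le_antisymm (h ▸ hdn) hd]
      _ ≤ d / n * H * H := by gcongr
      _ = d / n * H ^ 2 := by ring
  calc P ≤ √(d / n * H ^ 2) := Real.le_sqrt_of_sq_le hsq
    _ = H * (d / n) ^ (1 / 2 : ℝ) := by
        rw [Real.sqrt_mul (by positivity), Real.sqrt_sq hH, Real.sqrt_eq_rpow, mul_comm]
    _ ≤ H * (d / n) ^ θ :=
        mul_le_mul_of_nonneg_left (Real.rpow_le_rpow_of_exponent_ge' (by positivity)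
          (div_le_one_of_le₀ hdn hn) hθ.1 hθ.2) hH

lemma exists_decay_parameter (lam : ℝ) :
    ∃ A : ℝ, 1 + lam ≤ A ∧ 512 * A ^ 4 * Real.exp (-(A - 1)) ≤ 1 / 2 := by
  have hlim := (Real.tendsto_pow_mul_exp_neg_atTop_nhds_zero 4).const_mul (512 * Real.exp 1)
  rw [mul_zero] at hlim
  obtain ⟨A, hsmall, hA⟩ :=
    ((hlim.eventually_lt_const one_half_pos).and (eventually_ge_atTop (1 + lam))).exists
  refine ⟨A, hA, le_trans (le_of_eq ?_) hsmall.le⟩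
  rw [show -(A - 1) = 1 + -A by ring, Real.exp_add]
  ring

variable {A L T lam θ : ℝ}

lemma samplingScale_floor (hL : 1 ≤ L) :
    SamplingScale L ⌊Real.exp L⌋₊ (⌊Real.exp (20 * L) * L⌋₊ + 1) := by
  have hL0 : 0 < L := by linarith
  have hexp : 2 ≤ Real.exp L := by linarith [Real.add_one_le_exp L]
  have hN : 0 < ⌊Real.exp L⌋₊ := Nat.floor_pos.mpr (by linarith)
  have hNR : (1 : ℝ) ≤ ⌊Real.exp L⌋₊ := by exact_mod_cast hN
  have hNexp : (⌊Real.exp L⌋₊ : ℝ) ≤ Real.exp L := Nat.floor_le (Real.exp_nonneg _)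
  refine ⟨hL, hN, (Real.log_le_iff_le_exp (by linarith)).mpr hNexp, ?_, ?_, ?_⟩
  · linarith [Nat.lt_floor_add_one (Real.exp L)]
  · have hpi : π ≤ Real.exp (14 * L) := by
      linarith [Real.add_one_le_exp (14 * L), Real.pi_lt_d2]
    calc π * (⌊Real.exp L⌋₊ : ℝ) ^ 6 * L ≤ Real.exp (14 * L) * Real.exp L ^ 6 * L := by gcongr
      _ = Real.exp (20 * L) * L := by
          rw [← Real.exp_nat_mul, ← Real.exp_add]
          ring_nf
      _ ≤ _ := by exact_mod_cast (Nat.lt_floor_add_one _).le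
  · have hquot : ((⌊Real.exp (20 * L) * L⌋₊ + 1 : ℕ) : ℝ) / L ≤ Real.exp (20 * L) + 1 := by
      rw [div_le_iff₀ hL0, Nat.cast_add_one]
      linarith [Nat.floor_le (show 0 ≤ Real.exp (20 * L) * L by positivity)]
    rw [logHeight, abs_of_nonneg (by positivity), Real.log_le_iff_le_exp (by positivity)]
    calc _ ≤ Real.exp (20 * L) * 2 := by linarith [Real.add_one_le_exp (20 * L)]
      _ ≤ Real.exp (20 * L) * Real.exp L := by gcongr
      _ = Real.exp (21 * L) := by
          rw [← Real.exp_add]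
          ring_nf

lemma one_div_add_gap_le (hL : 0 < L) (hlam : 0 ≤ lam) (hA : 1 + lam ≤ A) :
    1 / L + 2 * π * lam / (20 * L) ≤ A / L := by
  have hpi : 2 * π * lam / 20 ≤ lam := by nlinarith [Real.pi_lt_d2]
  calc 1 / L + 2 * π * lam / (20 * L) = (1 + 2 * π * lam / 20) / L := by field_simp
    _ ≤ A / L := by
        gcongr
        linarith

lemma pairCount_le_of_decay (hRH : RiemannHypothesis) (hlam : 0 ≤ lam) (hA : 1 + lam ≤ A)
    (hdecay : 512 * A ^ 4 * Real.exp (-(A - 1)) ≤ 1 / 2) (hT : 20 * A ≤ Real.log T) (hT0 : 0 < T)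
    (hθ : θ ∈ Set.Icc 0 (1 / 2)) :
    (pairCount T (2 * π * lam / Real.log T) : ℝ) ≤
      windowConst A * (T * Real.log T) * Ddprop lam T ^ θ := by
  obtain ⟨L, hlog⟩ : ∃ L, Real.log T = 20 * L := ⟨Real.log T / 20, by ring⟩
  have hA1 : 1 ≤ A := by linarith
  have hAL : A ≤ L := by linarith
  have hL : 0 < L := by linarith
  have hscale := samplingScale_floor (hA1.trans hAL)
  rw [← hlog, Real.exp_log hT0] at hscale
  set J := ⌊T * L⌋₊ + 1
  have hJ : T * L < J := by exact_mod_cast Nat.lt_floor_add_one (T * L)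
  have hJle : (J : ℝ) ≤ T * Real.log T := by
    have hfloor := Nat.floor_le (show 0 ≤ T * L by positivity)
    have hT1 : 1 ≤ T := by linarith [Real.log_le_sub_one_of_pos hT0]
    have hTL : 1 ≤ T * L := one_le_mul_of_one_le_of_one_le hT1 (hA1.trans hAL)
    rw [hlog, Nat.cast_add_one]
    linarith
  have hzeros := zetaN_le_sum_windowCount_pow_four (b := A / L) hL (by gcongr) hJ
  have hpairs := pairCount_sq_le (δ := 2 * π * lam / Real.log T) (b := A / L) hL
    (hlog ▸ one_div_add_gap_le hL hlam hA) hJ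
  rw [← Ddcount_eq_card_smallGapOrds] at hpairs
  have hmoment := sum_windowCount_pow_four_le hRH T hscale hA1 hAL hdecay
  calc (pairCount T (2 * π * lam / Real.log T) : ℝ)
      ≤ (∑ j ∈ Finset.range J, (windowCount T (A / L) L j : ℝ) ^ 4) * Ddprop lam T ^ θ :=
        le_mul_rpow_of_sq_le (Nat.cast_nonneg _) (by exact_mod_cast Ddcount_le_zetaN lam T)
          (by exact_mod_cast hzeros) (by exact_mod_cast hpairs) hθ
    _ ≤ windowConst A * (T * Real.log T) * Ddprop lam T ^ θ :=
        mul_le_mul_of_nonneg_right (hmoment.trans (mul_le_mul_of_nonneg_left hJle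
          (windowConst_pos (by linarith)).le)) (Real.rpow_nonneg (Ddprop_nonneg lam T) θ)

end Conclusion

theorem pair_count_bound_general (hRH : RiemannHypothesis) (lam : ℝ) (hlam : 0 ≤ lam) :
    ∃ C : ℝ, 0 < C ∧ ∀ᶠ T : ℝ in atTop, ∀ θ ∈ Set.Icc (0 : ℝ) (1 / 2),
      (pairCount T (2 * π * lam / Real.log T) : ℝ) ≤ C * (T * Real.log T) * Ddprop lam T ^ θ ∧
        (T * Real.log T) * Ddprop lam T ^ θ ≤ (T * Real.log T) * Dprop lam T ^ θ := by
  obtain ⟨A, hA, hdecay⟩ := exists_decay_parameter lam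
  refine ⟨windowConst A, windowConst_pos (by linarith), ?_⟩
  filter_upwards [Real.tendsto_log_atTop.eventually_ge_atTop (20 * A), eventually_gt_atTop 0]
    with T hT hT0 θ hθ
  refine ⟨pairCount_le_of_decay hRH hlam hA hdecay hT hT0 hθ, ?_⟩
  have hlog : 0 ≤ Real.log T := by linarith
  exact mul_le_mul_of_nonneg_left
    (Real.rpow_le_rpow (Ddprop_nonneg lam T) (Ddprop_le_Dprop lam T) hθ.1) (by positivity)

/-- Assume RH and fix `λ > 0`. Then for all sufficiently large `T`,
`#{(γ,γ') : 0<γ,γ'≤T, 0<|γ-γ'|≤2πλ/log T} ≪ (T log T) D_d(λ,T)^{1/4} ≤ (T log T) D(λ,T)^{1/4}`,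
with an implied constant depending at most on `λ`. -/
theorem pair_count_bound (hRH : RiemannHypothesis) (lam : ℝ) (hlam : 0 < lam) :
    ∃ C : ℝ, 0 < C ∧ ∀ᶠ T : ℝ in atTop,
      (pairCount T (2 * π * lam / Real.log T) : ℝ) ≤
          C * (T * Real.log T) * Ddprop lam T ^ ((1 : ℝ) / 4) ∧
        (T * Real.log T) * Ddprop lam T ^ ((1 : ℝ) / 4) ≤
          (T * Real.log T) * Dprop lam T ^ ((1 : ℝ) / 4) := by
  obtain ⟨C, hC, hbound⟩ := pair_count_bound_general hRH lam hlam.le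
  exact ⟨C, hC, hbound.mono fun T hT ↦ hT (1 / 4) (by norm_num)⟩
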